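/- arXiv:2005.12009 — 3 statements merged into one kernel-verified Lean document; each statement's English description precedes it below -/
import Mathlib

section
/- For every m̄ ∈ ℕ and every c̄ ≥ 1 there exists a constant C > 0 (depending only on m̄ and c̄) with the following property: let 𝒯 be a mesh of a compact interval [a,b] that is piecewise quasi-uniform with parameters (m̄, c̄), with a partition of its elements into at most m̄ blocks of consecutive elements, each block having element-length ratio at most c̄. Let v ∈ 𝕊_1(𝒯) be a continuous piecewise linear function that vanishes at every node of 𝒯 except possibly at the endpoints of the blocks (of which there are at most m̄ + 1). Then ∫_a^b ∫_a^b (v(x) − v(y))²/(x − y)² dx dy ≤ C · log(1 + R(𝒯)) · (sup_{x ∈ [a,b]} |v(x)|)², where R(𝒯) is the ratio of the largest to the smallest element length of 𝒯. -/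
open MeasureTheory Set

noncomputable def rampG (x h s : ℝ) : ℝ := max 0 (min 1 ((s - x) / h))

lemma rampG_of_le {x h s : ℝ} (hh : 0 < h) (hs : s ≤ x) : rampG x h s = 0 := by
  unfold rampG
  have : (s - x) / h ≤ 0 := div_nonpos_of_nonpos_of_nonneg (by linarith) hh.le
  exact max_eq_left ((min_le_right _ _).trans this)

lemma rampG_of_ge {x h s : ℝ} (hh : 0 < h) (hs : x + h ≤ s) : rampG x h s = 1 := by
  unfold rampG
  have : 1 ≤ (s - x) / h := by rw [le_div_iff₀ hh]; linarith
  rw [min_eq_left this]; norm_num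

lemma rampG_of_mem {x h s : ℝ} (hh : 0 < h) (h1 : x ≤ s) (h2 : s ≤ x + h) :
    rampG x h s = (s - x) / h := by
  unfold rampG
  have : (s - x) / h ≤ 1 := by rw [div_le_iff₀ hh]; linarith
  have h0 : 0 ≤ (s - x) / h := div_nonneg (by linarith) hh.le
  rw [min_eq_right this, max_eq_right h0]

lemma rampG_diff_le_one (x h s t : ℝ) : |rampG x h s - rampG x h t| ≤ 1 := by
  have h1 : ∀ s, 0 ≤ rampG x h s ∧ rampG x h s ≤ 1 := fun s =>
    ⟨le_max_left _ _, max_le zero_le_one (min_le_left _ _)⟩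
  rw [abs_le]; constructor <;> linarith [(h1 s).1, (h1 s).2, (h1 t).1, (h1 t).2]

lemma rampG_lip {x h : ℝ} (hh : 0 < h) (s t : ℝ) :
    |rampG x h s - rampG x h t| ≤ |t - s| / h := by
  have h1 : |rampG x h s - rampG x h t| ≤ |(s - x) / h - (t - x) / h| := by
    unfold rampG
    generalize (s - x) / h = p
    generalize (t - x) / h = q
    grind
  refine h1.trans (le_of_eq ?_)
  rw [← sub_div, abs_div, abs_of_pos hh, abs_sub_comm t s]; congr 2; ring

noncomputable def wkG (h u : ℝ) : ℝ := min (1 / h ^ 2) (1 / u ^ 2)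

def setG (x h Q : ℝ) : Set (ℝ × ℝ) :=
  {p | (|p.2| ≤ Q ∧ x - |p.2| < p.1 ∧ p.1 < x + h + |p.2|) ∨
    (Q < |p.2| ∧ ((x ≤ p.1 ∧ p.1 ≤ x + h) ∨ (x ≤ p.1 + p.2 ∧ p.1 + p.2 ≤ x + h)))}

lemma measurableSet_setG (x h Q : ℝ) : MeasurableSet (setG x h Q) := by
  unfold setG
  measurability

open Classical in
noncomputable def kerG (x h Q s u : ℝ) : ℝ := if (s, u) ∈ setG x h Q then wkG h u else 0

lemma wkG_nonneg (h u : ℝ) : 0 ≤ wkG h u := by unfold wkG; positivity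
lemma kerG_nonneg (x h Q s u : ℝ) : 0 ≤ kerG x h Q s u := by
  unfold kerG; split_ifs
  · exact wkG_nonneg _ _
  · exact le_rfl

lemma measurable_kerG (x h Q : ℝ) : Measurable (fun p : ℝ × ℝ => kerG x h Q p.1 p.2) := by
  unfold kerG wkG
  refine Measurable.ite (measurableSet_setG x h Q) ?_ measurable_const
  fun_prop

lemma ramp_ker {x h Q : ℝ} (hh : 0 < h) (s t : ℝ) (hu : |t - s| ≤ Q) :
    (rampG x h s - rampG x h t) ^ 2 / (s - t) ^ 2 ≤ kerG x h Q s (t - s) := by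
  rcases eq_or_ne s t with rfl | hst
  · simp [kerG_nonneg]
  have hpos : 0 < (s - t) ^ 2 := by have := sub_ne_zero.mpr hst; positivity
  unfold kerG
  split_ifs with hm
  · unfold wkG
    have e : (t - s) ^ 2 = (s - t) ^ 2 := by ring
    rw [e, ← sq_abs (rampG x h s - rampG x h t)]
    refine le_min ?_ ?_
    · rw [div_le_iff₀ hpos]
      calc _ ≤ (|t - s| / h) ^ 2 := by
            gcongr; exact rampG_lip hh s t
        _ = _ := by rw [div_pow, sq_abs, e]; ring
    · gcongr
      exact pow_le_one₀ (abs_nonneg _) (rampG_diff_le_one _ _ _ _)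
  · simp only [setG, mem_ofPred_eq, not_or, not_and, not_lt] at hm
    have h2 := hm.1 hu
    have : rampG x h s = rampG x h t := by
      have ha := neg_abs_le (t - s)
      have hb := le_abs_self (t - s)
      by_cases hc : x - |t - s| < s
      · have := h2 hc
        rw [rampG_of_ge hh (by linarith [abs_nonneg (t-s)]), rampG_of_ge hh (by linarith)]
      · push Not at hc
        rw [rampG_of_le hh (by linarith [abs_nonneg (t-s)]), rampG_of_le hh (by linarith)]
    rw [this]; simp

noncomputable def omG (h Q r : ℝ) : ℝ := if r ≤ h then 3 / h else if r ≤ Q then 3 / r else 3 * h / r ^ 2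

lemma inner_kerG {x h Q : ℝ} (hh : 0 < h) (hQ : h ≤ Q) (u : ℝ) :
    ∫⁻ s, ENNReal.ofReal (kerG x h Q s u) ≤ ENNReal.ofReal (omG h Q |u|) := by
  have hle : ∫⁻ s, ENNReal.ofReal (kerG x h Q s u)
      ≤ ENNReal.ofReal (wkG h u) * volume {s | (s, u) ∈ setG x h Q} := by
    rw [← lintegral_indicator_const]
    · apply lintegral_mono
      intro s
      by_cases hs : (s, u) ∈ setG x h Q
      · rw [indicator_of_mem (by exact hs)]
        simp [kerG, hs]
      · simp [kerG, hs]
    · exact (measurableSet_setG x h Q).preimage (by fun_prop : Measurable fun s : ℝ => (s, u))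
  refine hle.trans ?_
  by_cases h1 : |u| ≤ Q
  · have : {s | (s, u) ∈ setG x h Q} ⊆ Ioo (x - |u|) (x + h + |u|) := by
      intro s hs
      rcases hs with hs | hs
      · exact hs.2
      · exact absurd h1 (not_le.mpr hs.1)
    refine (mul_le_mul_right (measure_mono this) _).trans ?_
    rw [Real.volume_Ioo, ← ENNReal.ofReal_mul (wkG_nonneg _ _)]
    apply ENNReal.ofReal_le_ofReal
    have e : x + h + |u| - (x - |u|) = h + 2 * |u| := by ring
    rw [e]; unfold omG
    have h0 := abs_nonneg u
    split_ifs with h2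
    · calc _ ≤ 1 / h ^ 2 * (3 * h) := by
            unfold wkG; gcongr
            · exact min_le_left _ _
            · linarith
        _ = _ := by field_simp
    · push Not at h2
      have hu : 0 < |u| := by linarith
      calc _ ≤ 1 / |u| ^ 2 * (3 * |u|) := by
            unfold wkG; rw [sq_abs]; gcongr
            · exact min_le_right _ _
            · linarith
        _ = _ := by field_simp
  · have : {s | (s, u) ∈ setG x h Q} ⊆ Icc x (x + h) ∪ Icc (x - u) (x + h - u) := by
      intro s hs
      rcases hs with hs | hs
      · exact absurd hs.1 h1
      · rcases hs.2 with hs | hs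
        · exact Or.inl hs
        · right; simp only [mem_Icc] at *; constructor <;> linarith
    refine (mul_le_mul_right ((measure_mono this).trans (measure_union_le _ _)) _).trans ?_
    rw [Real.volume_Icc, Real.volume_Icc, ← ENNReal.ofReal_add (by linarith) (by linarith), ← ENNReal.ofReal_mul (wkG_nonneg _ _)]
    apply ENNReal.ofReal_le_ofReal
    have e : x + h - x + (x + h - u - (x - u)) = 2 * h := by ring
    rw [e]; unfold omG
    rw [if_neg (by linarith), if_neg h1]
    calc _ ≤ 1 / |u| ^ 2 * (3 * h) := by
            unfold wkG; rw [sq_abs]; gcongr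
            · exact min_le_right _ _
            · linarith
        _ = _ := by ring

lemma lint_half {h Q : ℝ} (hh : 0 < h) (hQ : h ≤ Q) :
    ∫⁻ u in Ioi (0:ℝ), ENNReal.ofReal (omG h Q u) ≤ ENNReal.ofReal (6 + 3 * Real.log (Q / h)) := by
  have hQ0 : 0 < Q := by linarith
  have hsub : Ioi (0:ℝ) ⊆ (Ioc 0 h ∪ Ioc h Q) ∪ Ioi Q := by
    intro u hu
    simp only [mem_union, mem_Ioc, mem_Ioi] at *
    grind
  have h1 : ∫⁻ u in Ioc 0 h, ENNReal.ofReal (omG h Q u) ≤ ENNReal.ofReal 3 := by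
    calc _ ≤ ∫⁻ u in Ioc 0 h, ENNReal.ofReal (3 / h) := by
          apply setLIntegral_mono' measurableSet_Ioc
          intro u hu
          simp [omG, hu.2]
      _ = ENNReal.ofReal 3 := by
          rw [setLIntegral_const, Real.volume_Ioc, ← ENNReal.ofReal_mul (by positivity)]
          congr 1; field_simp; ring
  have h2 : ∫⁻ u in Ioc h Q, ENNReal.ofReal (omG h Q u) ≤ ENNReal.ofReal (3 * Real.log (Q / h)) := by
    have hint : IntegrableOn (fun u : ℝ => 3 * (1 / u)) (Ioc h Q) := by
      rw [← intervalIntegrable_iff_integrableOn_Ioc_of_le hQ]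
      apply ContinuousOn.intervalIntegrable
      rw [uIcc_of_le hQ]
      intro u hu
      have : u ≠ 0 := by linarith [hu.1]
      fun_prop (disch := assumption)
    calc _ ≤ ∫⁻ u in Ioc h Q, ENNReal.ofReal (3 * (1 / u)) := by
          apply setLIntegral_mono' measurableSet_Ioc
          intro u hu
          rw [omG, if_neg (not_le.mpr hu.1), if_pos hu.2]
          apply le_of_eq; congr 1; ring
      _ = ENNReal.ofReal (3 * Real.log (Q / h)) := by
          rw [← ofReal_integral_eq_lintegral_ofReal hint]
          · rw [← intervalIntegral.integral_of_le hQ, intervalIntegral.integral_const_mul,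
              integral_one_div_of_pos hh hQ0]
          · filter_upwards [ae_restrict_mem measurableSet_Ioc] with u hu
            have : 0 < u := by linarith [hu.1]
            simp only [Pi.zero_apply]; positivity
  have h3 : ∫⁻ u in Ioi Q, ENNReal.ofReal (omG h Q u) ≤ ENNReal.ofReal 3 := by
    have hint : IntegrableOn (fun u : ℝ => 3 * h * u ^ (-2:ℝ)) (Ioi Q) :=
      (integrableOn_Ioi_rpow_of_lt (by norm_num) hQ0).const_mul _
    calc _ ≤ ∫⁻ u in Ioi Q, ENNReal.ofReal (3 * h * u ^ (-2:ℝ)) := by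
          apply setLIntegral_mono' measurableSet_Ioi
          intro u hu
          have hu' : Q < u := hu
          rw [omG, if_neg (by linarith), if_neg (by linarith)]
          apply le_of_eq; congr 1
          rw [Real.rpow_neg (by linarith)]; norm_num; ring
      _ ≤ ENNReal.ofReal 3 := by
          rw [← ofReal_integral_eq_lintegral_ofReal hint]
          · apply ENNReal.ofReal_le_ofReal
            rw [integral_const_mul, integral_Ioi_rpow_of_lt (by norm_num) hQ0]
            norm_num
            rw [Real.rpow_neg_one, ← div_eq_mul_inv, div_le_iff₀ hQ0]
            linarith
          · filter_upwards [ae_restrict_mem measurableSet_Ioi] with u hu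
            have : 0 < u := by linarith [mem_Ioi.mp hu]
            simp only [Pi.zero_apply]; positivity
  have hlog : 0 ≤ Real.log (Q / h) := Real.log_nonneg (by rw [le_div_iff₀ hh]; linarith)
  calc _ ≤ ∫⁻ u in (Ioc 0 h ∪ Ioc h Q) ∪ Ioi Q, ENNReal.ofReal (omG h Q u) := lintegral_mono_set hsub
    _ ≤ _ := lintegral_union_le _ _ _
    _ ≤ _ := add_le_add_left (lintegral_union_le _ _ _) _
    _ ≤ _ := add_le_add (add_le_add h1 h2) h3
    _ = _ := by
      rw [← ENNReal.ofReal_add (by norm_num) (by positivity), ← ENNReal.ofReal_add (by positivity) (by norm_num)]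
      congr 1; ring

lemma lint_full {h Q : ℝ} (hh : 0 < h) (hQ : h ≤ Q) :
    ∫⁻ u : ℝ, ENNReal.ofReal (omG h Q |u|) ≤ ENNReal.ofReal (12 + 6 * Real.log (Q / h)) := by
  have hlog : 0 ≤ Real.log (Q / h) := Real.log_nonneg (by rw [le_div_iff₀ hh]; linarith)
  have hA : ∫⁻ u in Ioi (0:ℝ), ENNReal.ofReal (omG h Q |u|) ≤ ENNReal.ofReal (6 + 3 * Real.log (Q / h)) := by
    rw [setLIntegral_congr_fun (g := fun u => ENNReal.ofReal (omG h Q u)) measurableSet_Ioi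
      (fun u hu => by simp only [abs_of_pos (mem_Ioi.mp hu)])]
    exact lint_half hh hQ
  have hB : ∫⁻ u in Iic (0:ℝ), ENNReal.ofReal (omG h Q |u|) ≤ ENNReal.ofReal (6 + 3 * Real.log (Q / h)) := by
    have := (Measure.measurePreserving_neg (volume : Measure ℝ)).setLIntegral_comp_preimage_emb
      (MeasurableEquiv.neg ℝ).measurableEmbedding (fun u => ENNReal.ofReal (omG h Q |u|)) (Iio 0)
    rw [setLIntegral_congr Iio_ae_eq_Iic.symm, ← this]
    simpa using hA
  have : (univ : Set ℝ) = Iic 0 ∪ Ioi 0 := by simp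
  rw [← setLIntegral_univ, this]
  refine (lintegral_union_le _ _ _).trans ((add_le_add hB hA).trans (le_of_eq ?_))
  rw [← ENNReal.ofReal_add (by positivity) (by positivity)]
  congr 1; ring

lemma double_kerG {x h Q : ℝ} (hh : 0 < h) (hQ : h ≤ Q) :
    ∫⁻ s, ∫⁻ t, ENNReal.ofReal (kerG x h Q s (t - s)) ≤ ENNReal.ofReal (12 + 6 * Real.log (Q / h)) := by
  have h1 : ∀ s, ∫⁻ t, ENNReal.ofReal (kerG x h Q s (t - s)) = ∫⁻ u, ENNReal.ofReal (kerG x h Q s u) :=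
    fun s => lintegral_sub_right_eq_self (fun u => ENNReal.ofReal (kerG x h Q s u)) s
  simp_rw [h1]
  rw [lintegral_lintegral_swap]
  · exact (lintegral_mono fun u => inner_kerG hh hQ u).trans (lint_full hh hQ)
  · exact (measurable_kerG x h Q).ennreal_ofReal.aemeasurable

lemma mesh_le {r : ℕ} {ξ : ℕ → ℝ} (hmono : ∀ i < r, ξ i < ξ (i + 1)) {i j : ℕ} (hij : i ≤ j)
    (hj : j ≤ r) : ξ i ≤ ξ j := by
  induction j, hij using Nat.le_induction with
  | base => exact le_rfl
  | succ k hk ih => exact (ih (by omega)).trans (hmono k (by omega)).le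

lemma pw_affine {r : ℕ} {ξ : ℕ → ℝ} (hmono : ∀ i < r, ξ i < ξ (i + 1)) {v : ℝ → ℝ}
    (hcont : ContinuousOn v (Icc (ξ 0) (ξ r)))
    (hlin : ∀ i < r, ∃ α γ : ℝ, ∀ t ∈ Ioo (ξ i) (ξ (i + 1)), v t = α * t + γ)
    {i : ℕ} (hi : i < r) {x : ℝ} (hx : x ∈ Icc (ξ i) (ξ (i + 1))) :
    v x = v (ξ i) + (v (ξ (i + 1)) - v (ξ i)) * rampG (ξ i) (ξ (i + 1) - ξ i) x := by
  obtain ⟨α, γ, hag⟩ := hlin i hi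
  have hlt := hmono i hi
  have hE : EqOn v (fun t => α * t + γ) (Icc (ξ i) (ξ (i + 1))) := by
    refine EqOn.of_subset_closure (s := Ioo (ξ i) (ξ (i + 1))) hag
      (hcont.mono (Icc_subset_Icc (mesh_le hmono (Nat.zero_le _) hi.le)
        (mesh_le hmono hi le_rfl))) (by fun_prop) Ioo_subset_Icc_self ?_
    rw [closure_Ioo hlt.ne]
  have hh : 0 < ξ (i + 1) - ξ i := by linarith
  rw [rampG_of_mem hh hx.1 (by linarith [hx.2]), hE hx, hE (left_mem_Icc.mpr hlt.le),
    hE (right_mem_Icc.mpr hlt.le)]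
  field_simp
  ring

lemma telescope {r : ℕ} {ξ : ℕ → ℝ} (hmono : ∀ i < r, ξ i < ξ (i + 1)) {v : ℝ → ℝ}
    (hcont : ContinuousOn v (Icc (ξ 0) (ξ r)))
    (hlin : ∀ i < r, ∃ α γ : ℝ, ∀ t ∈ Ioo (ξ i) (ξ (i + 1)), v t = α * t + γ)
    (k : ℕ) (hk : k ≤ r) : ∀ x ∈ Icc (ξ 0) (ξ k),
    v x = v (ξ 0) + ∑ j ∈ Finset.range k,
      (v (ξ (j + 1)) - v (ξ j)) * rampG (ξ j) (ξ (j + 1) - ξ j) x := by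
  induction k with
  | zero =>
    intro x hx
    have : x = ξ 0 := le_antisymm hx.2 hx.1
    simp [this]
  | succ k ih =>
    intro x hx
    have ih := ih (by omega)
    have hk' := hmono k (by omega)
    have hh : 0 < ξ (k + 1) - ξ k := by linarith
    rw [Finset.sum_range_succ]
    rcases le_total x (ξ k) with hxk | hxk
    · rw [rampG_of_le hh hxk, ih x ⟨hx.1, hxk⟩]; ring
    · rw [pw_affine hmono hcont hlin (show k < r by omega) ⟨hxk, hx.2⟩]
      have h1 := ih (ξ k) ⟨mesh_le hmono (Nat.zero_le _) (by omega), le_rfl⟩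
      have h2 : ∑ j ∈ Finset.range k, (v (ξ (j + 1)) - v (ξ j)) * rampG (ξ j) (ξ (j + 1) - ξ j) x
          = ∑ j ∈ Finset.range k,
            (v (ξ (j + 1)) - v (ξ j)) * rampG (ξ j) (ξ (j + 1) - ξ j) (ξ k) := by
        apply Finset.sum_congr rfl
        intro j hj
        have hj := Finset.mem_range.mp hj
        have hj' := hmono j (by omega)
        have hjk : ξ (j + 1) ≤ ξ k := mesh_le hmono hj (by omega)
        rw [rampG_of_ge (by linarith) (by linarith), rampG_of_ge (by linarith) (by linarith)]
      rw [h2]; linarith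

lemma elem_exists {r : ℕ} (hr : 0 < r) {ξ : ℕ → ℝ} (k : ℕ) (hk : k ≤ r)
    (hmono : ∀ i < r, ξ i < ξ (i + 1)) :
    ∀ x ∈ Icc (ξ 0) (ξ k), ∃ i < r, x ∈ Icc (ξ i) (ξ (i + 1)) := by
  induction k with
  | zero =>
    intro x hx
    have : x = ξ 0 := le_antisymm hx.2 hx.1
    exact ⟨0, hr, hx.1, this.le.trans (hmono 0 hr).le⟩
  | succ k ih =>
    intro x hx
    rcases le_total x (ξ k) with hxk | hxk
    · exact ih (by omega) x ⟨hx.1, hxk⟩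
    · exact ⟨k, by omega, hxk, hx.2⟩

lemma ptwise {r : ℕ} (hr : 0 < r) {ξ : ℕ → ℝ} (hmono : ∀ i < r, ξ i < ξ (i + 1)) {v : ℝ → ℝ}
    (hcont : ContinuousOn v (Icc (ξ 0) (ξ r)))
    (hlin : ∀ i < r, ∃ α γ : ℝ, ∀ t ∈ Ioo (ξ i) (ξ (i + 1)), v t = α * t + γ)
    {M : ℝ} (hM : ∀ x ∈ Icc (ξ 0) (ξ r), |v x| ≤ M) {Q : ℝ}
    (hQ : ∀ i < r, ξ (i + 1) - ξ i ≤ Q)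
    (A : Finset ℕ) (hA : A ⊆ Finset.range r)
    (hA' : ∀ i < r, i ∉ A → v (ξ i) = 0 ∧ v (ξ (i + 1)) = 0)
    {s t : ℝ} (hs : s ∈ Icc (ξ 0) (ξ r)) (ht : t ∈ Icc (ξ 0) (ξ r)) :
    (v s - v t) ^ 2 / (s - t) ^ 2 ≤
      4 * M ^ 2 * A.card * ∑ i ∈ A, kerG (ξ i) (ξ (i + 1) - ξ i) Q s (t - s) := by
  have hM0 : 0 ≤ M := (abs_nonneg _).trans (hM s hs)
  have hnode : ∀ i ≤ r, |v (ξ i)| ≤ M := fun i hi =>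
    hM _ ⟨mesh_le hmono (Nat.zero_le _) hi, mesh_le hmono hi le_rfl⟩
  have hsumnn : ∀ i ∈ A, 0 ≤ kerG (ξ i) (ξ (i + 1) - ξ i) Q s (t - s) :=
    fun i _ => kerG_nonneg _ _ _ _ _
  by_cases hu : |t - s| ≤ Q
  · have key : v s - v t = ∑ i ∈ A, (v (ξ (i + 1)) - v (ξ i)) *
        (rampG (ξ i) (ξ (i + 1) - ξ i) s - rampG (ξ i) (ξ (i + 1) - ξ i) t) := by
      rw [telescope hmono hcont hlin r le_rfl s hs, telescope hmono hcont hlin r le_rfl t ht,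
        add_sub_add_left_eq_sub, ← Finset.sum_sub_distrib]
      rw [← Finset.sum_subset hA]
      · exact Finset.sum_congr rfl fun i _ => by ring
      · intro i hi hiA
        have := hA' i (Finset.mem_range.mp hi) hiA
        rw [this.1, this.2]; ring
    rw [key]
    have h1 := sq_sum_le_card_mul_sum_sq (s := A) (f := fun i => (v (ξ (i + 1)) - v (ξ i)) *
        (rampG (ξ i) (ξ (i + 1) - ξ i) s - rampG (ξ i) (ξ (i + 1) - ξ i) t))
    refine (div_le_div_of_nonneg_right h1 (sq_nonneg _)).trans ?_
    rw [mul_div_assoc, Finset.sum_div, mul_comm (4 * M ^ 2), mul_assoc]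
    refine mul_le_mul_of_nonneg_left ?_ (Nat.cast_nonneg _)
    rw [Finset.mul_sum]
    apply Finset.sum_le_sum
    intro i hi
    have hir := Finset.mem_range.mp (hA hi)
    have hd : (v (ξ (i + 1)) - v (ξ i)) ^ 2 ≤ 4 * M ^ 2 := by
      have a1 := abs_le.mp (hnode i hir.le)
      have a2 := abs_le.mp (hnode (i + 1) hir)
      have : (v (ξ (i + 1)) - v (ξ i)) ^ 2 ≤ (2 * M) ^ 2 :=
        sq_le_sq' (by linarith) (by linarith)
      linarith [this, show (2 * M) ^ 2 = 4 * M ^ 2 by ring]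
    rw [mul_pow, mul_div_assoc]
    exact mul_le_mul hd (ramp_ker (by linarith [hmono i hir]) s t hu) (by positivity) (by positivity)
  · have hex : ∀ x ∈ Icc (ξ 0) (ξ r), v x ≠ 0 → ∃ i ∈ A, x ∈ Icc (ξ i) (ξ (i + 1)) := by
      intro x hx hvx
      obtain ⟨i, hi, hxi⟩ := elem_exists hr r le_rfl hmono x hx
      refine ⟨i, ?_, hxi⟩
      by_contra hiA
      have := hA' i hi hiA
      apply hvx
      rw [pw_affine hmono hcont hlin hi hxi, this.1, this.2]; ring
    by_cases hz : v s = 0 ∧ v t = 0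
    · rw [hz.1, hz.2]
      have := Finset.sum_nonneg hsumnn
      simp only [sub_self, ne_eq, OfNat.ofNat_ne_zero, not_false_eq_true, zero_pow, zero_div]
      positivity
    obtain ⟨i, hiA, hi⟩ : ∃ i ∈ A, s ∈ Icc (ξ i) (ξ (i + 1)) ∨ t ∈ Icc (ξ i) (ξ (i + 1)) := by
      by_cases hvs : v s = 0
      · obtain ⟨i, h1, h2⟩ := hex t ht (fun h => hz ⟨hvs, h⟩)
        exact ⟨i, h1, Or.inr h2⟩
      · obtain ⟨i, h1, h2⟩ := hex s hs hvs
        exact ⟨i, h1, Or.inl h2⟩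
    have hir := Finset.mem_range.mp (hA hiA)
    have hcard : (1 : ℝ) ≤ A.card := by
      exact_mod_cast Finset.card_pos.mpr ⟨i, hiA⟩
    have hker : 1 / (s - t) ^ 2 ≤ kerG (ξ i) (ξ (i + 1) - ξ i) Q s (t - s) := by
      have hmem : (s, t - s) ∈ setG (ξ i) (ξ (i + 1) - ξ i) Q := by
        right
        refine ⟨not_le.mp hu, ?_⟩
        simp only [add_sub_cancel]
        exact hi
      rw [kerG, if_pos hmem, wkG]
      have e : (t - s) ^ 2 = (s - t) ^ 2 := by ring
      rw [e]
      refine le_min ?_ le_rfl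
      have hh : 0 < ξ (i + 1) - ξ i := by linarith [hmono i hir]
      apply one_div_le_one_div_of_le (by positivity)
      rw [← e, ← sq_abs (t - s)]
      exact pow_le_pow_left₀ hh.le (by linarith [hQ i hir]) 2
    have hd : (v s - v t) ^ 2 ≤ 4 * M ^ 2 := by
      have a1 := abs_le.mp (hM s hs)
      have a2 := abs_le.mp (hM t ht)
      have : (v s - v t) ^ 2 ≤ (2 * M) ^ 2 := sq_le_sq' (by linarith) (by linarith)
      linarith [this, show (2 * M) ^ 2 = 4 * M ^ 2 by ring]
    calc (v s - v t) ^ 2 / (s - t) ^ 2 = (v s - v t) ^ 2 * (1 / (s - t) ^ 2) := by ring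
      _ ≤ (4 * M ^ 2 * A.card) * ∑ i ∈ A, kerG (ξ i) (ξ (i + 1) - ξ i) Q s (t - s) := by
        apply mul_le_mul
        · exact hd.trans (le_mul_of_one_le_right (by positivity) hcard)
        · exact hker.trans (Finset.single_le_sum hsumnn hiA)
        · positivity
        · positivity

/-- For every `mBar ∈ ℕ` and `cBar ≥ 1` there is `C > 0` (depending only on
`mBar` and `cBar`) such that: for every compact interval `[a,b]`, every mesh of `[a,b]` that
is piecewise quasi-uniform with parameters `(mBar, cBar)` (with blocks delimited by the
indices `β 0 < β 1 < ⋯ < β m`, `m ≤ mBar`), and every continuous piecewise linear `v` that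
vanishes at every node except possibly at endpoints of the blocks, one has
`|v|²_{1/2,(a,b)} ≤ C · log(1 + R) · (sup_{[a,b]} |v|)²`, where `R` is the ratio between the
largest and the smallest element length of the mesh. -/
theorem gagliardo_bound_block_endpoint_function (mBar : ℕ) (cBar : ℝ) (hc : 1 ≤ cBar) :
    ∃ C : ℝ, 0 < C ∧
      ∀ (a b : ℝ) (_hab : a < b) (r : ℕ) (hr : 0 < r) (ξ : ℕ → ℝ)
        (_h0 : ξ 0 = a) (_hr' : ξ r = b) (_hmono : ∀ i < r, ξ i < ξ (i + 1))
        -- the block structure of the piecewise quasi-uniform mesh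
        (m : ℕ) (_hm : m ≤ mBar) (β : ℕ → ℕ)
        (_hβ0 : β 0 = 0) (_hβm : β m = r) (_hβmono : ∀ l < m, β l < β (l + 1))
        (_hqu : ∀ l < m, ∀ i, β l ≤ i → i < β (l + 1) → ∀ j, β l ≤ j → j < β (l + 1) →
          ξ (i + 1) - ξ i ≤ cBar * (ξ (j + 1) - ξ j))
        (v : ℝ → ℝ) (_hcont : ContinuousOn v (Icc a b))
        -- `v ∈ 𝕊_1(𝒯)`: continuous and affine on each element
        (_hlin : ∀ i < r, ∃ α γ : ℝ, ∀ t ∈ Ioo (ξ i) (ξ (i + 1)), v t = α * t + γ)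
        -- `v` vanishes at every node that is not an endpoint of a block
        (_hvanish : ∀ i ≤ r, (∀ l ≤ m, β l ≠ i) → v (ξ i) = 0),
        (∫ s in Ioo a b, ∫ t in Ioo a b, (v s - v t) ^ 2 / (s - t) ^ 2) ≤
          C * Real.log (1 +
              ((Finset.range r).sup' (Finset.nonempty_range_iff.mpr hr.ne')
                  fun i => ξ (i + 1) - ξ i) /
              ((Finset.range r).inf' (Finset.nonempty_range_iff.mpr hr.ne')
                  fun i => ξ (i + 1) - ξ i)) *
            (sSup ((fun t => |v t|) '' Icc a b)) ^ 2 := by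
  refine ⟨480 * ((mBar : ℝ) + 1) ^ 2, by positivity, ?_⟩
  intro a b hab r hr ξ h0 hr' hmono m hm β hβ0 hβm hβmono hqu v hcont hlin hvanish
  subst h0 hr'
  set Q := (Finset.range r).sup' (Finset.nonempty_range_iff.mpr hr.ne')
    fun i => ξ (i + 1) - ξ i with hQdef
  set P := (Finset.range r).inf' (Finset.nonempty_range_iff.mpr hr.ne')
    fun i => ξ (i + 1) - ξ i with hPdef
  set M := sSup ((fun t => |v t|) '' Icc (ξ 0) (ξ r)) with hMdef
  have hQ : ∀ i < r, ξ (i + 1) - ξ i ≤ Q := fun i hi =>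
    Finset.le_sup' (fun i => ξ (i + 1) - ξ i) (Finset.mem_range.mpr hi)
  have hP : ∀ i < r, P ≤ ξ (i + 1) - ξ i := fun i hi =>
    Finset.inf'_le (fun i => ξ (i + 1) - ξ i) (Finset.mem_range.mpr hi)
  have hP0 : 0 < P := by
    rw [hPdef, Finset.lt_inf'_iff]
    intro i hi
    linarith [hmono i (Finset.mem_range.mp hi)]
  have hPQ : P ≤ Q := (hP 0 hr).trans (hQ 0 hr)
  have hM : ∀ x ∈ Icc (ξ 0) (ξ r), |v x| ≤ M := fun x hx =>
    le_csSup (isCompact_Icc.image_of_continuousOn hcont.abs).bddAbove (mem_image_of_mem _ hx)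
  set L := Real.log (1 + Q / P) with hLdef
  have hR1 : 1 ≤ Q / P := by rw [le_div_iff₀ hP0]; linarith
  have hL : 1 / 2 ≤ L := by
    have h1 : Real.log 2 ≤ L := Real.log_le_log (by norm_num) (by linarith)
    linarith [Real.log_two_gt_d9]
  have hker : ∀ i < r, 12 + 6 * Real.log (Q / (ξ (i + 1) - ξ i)) ≤ 30 * L := by
    intro i hi
    have hh : 0 < ξ (i + 1) - ξ i := by linarith [hmono i hi]
    have h1 : Real.log (Q / (ξ (i + 1) - ξ i)) ≤ L := by
      apply Real.log_le_log (div_pos (by linarith) hh)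
      have : Q / (ξ (i + 1) - ξ i) ≤ Q / P :=
        div_le_div_of_nonneg_left (by linarith) hP0 (hP i hi)
      linarith
    linarith
  classical
  set A : Finset ℕ := (Finset.range r).filter (fun i => ∃ l ≤ m, β l = i ∨ β l = i + 1) with hAdef
  have hAcard : (A.card : ℝ) ≤ 2 * ((mBar : ℝ) + 1) := by
    have hsub : A ⊆ (Finset.range (m + 1)).image β ∪
        (Finset.range (m + 1)).image (fun l => β l - 1) := by
      intro i hi
      obtain ⟨l, hl, h | h⟩ := (Finset.mem_filter.mp hi).2
      · exact Finset.mem_union_left _ (Finset.mem_image.mpr ⟨l, Finset.mem_range.mpr (by omega), h⟩)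
      · exact Finset.mem_union_right _
          (Finset.mem_image.mpr ⟨l, Finset.mem_range.mpr (by omega), by omega⟩)
    have h1 := (Finset.card_le_card hsub).trans (Finset.card_union_le _ _)
    have h2 : ((Finset.range (m + 1)).image β).card ≤ m + 1 := by
      simpa using Finset.card_image_le (s := Finset.range (m + 1)) (f := β)
    have h3 : ((Finset.range (m + 1)).image (fun l => β l - 1)).card ≤ m + 1 := by
      simpa using Finset.card_image_le (s := Finset.range (m + 1)) (f := fun l => β l - 1)
    have h4 : A.card ≤ 2 * (mBar + 1) := by omega
    exact_mod_cast h4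
  have hA' : ∀ i < r, i ∉ A → v (ξ i) = 0 ∧ v (ξ (i + 1)) = 0 := by
    intro i hi hiA
    have hn : ∀ l ≤ m, β l ≠ i ∧ β l ≠ i + 1 := by
      intro l hl
      constructor
      · exact fun h => hiA (Finset.mem_filter.mpr ⟨Finset.mem_range.mpr hi, l, hl, Or.inl h⟩)
      · exact fun h => hiA (Finset.mem_filter.mpr ⟨Finset.mem_range.mpr hi, l, hl, Or.inr h⟩)
    exact ⟨hvanish i hi.le fun l hl => (hn l hl).1, hvanish (i + 1) hi fun l hl => (hn l hl).2⟩
  set c : ℝ := 4 * M ^ 2 * A.card with hcdef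
  have hc0 : 0 ≤ c := by positivity
  have hmeas : ∀ i, Measurable (fun p : ℝ × ℝ =>
      ENNReal.ofReal (kerG (ξ i) (ξ (i + 1) - ξ i) Q p.1 (p.2 - p.1))) := fun i =>
    ((measurable_kerG _ _ _).comp
      (by fun_prop : Measurable fun p : ℝ × ℝ => (p.1, p.2 - p.1))).ennreal_ofReal
  have hbound : ∫⁻ s in Ioo (ξ 0) (ξ r), ∫⁻ t in Ioo (ξ 0) (ξ r),
      ‖(v s - v t) ^ 2 / (s - t) ^ 2‖ₑ ≤ ENNReal.ofReal (c * (A.card * (30 * L))) := by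
    calc _ ≤ ∫⁻ s in Ioo (ξ 0) (ξ r), ∫⁻ t in Ioo (ξ 0) (ξ r), ENNReal.ofReal c *
          ∑ i ∈ A, ENNReal.ofReal (kerG (ξ i) (ξ (i + 1) - ξ i) Q s (t - s)) := by
          refine setLIntegral_mono' measurableSet_Ioo fun s hs => ?_
          refine setLIntegral_mono' measurableSet_Ioo fun t ht => ?_
          rw [← ENNReal.ofReal_sum_of_nonneg (fun i _ => kerG_nonneg _ _ _ _ _),
            ← ENNReal.ofReal_mul hc0, Real.enorm_eq_ofReal (by positivity)]
          exact ENNReal.ofReal_le_ofReal (ptwise hr hmono hcont hlin hM hQ A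
            (Finset.filter_subset _ _) hA' (Ioo_subset_Icc_self hs) (Ioo_subset_Icc_self ht))
      _ ≤ ∫⁻ s, ∫⁻ t, ENNReal.ofReal c *
          ∑ i ∈ A, ENNReal.ofReal (kerG (ξ i) (ξ (i + 1) - ξ i) Q s (t - s)) :=
          (setLIntegral_le_lintegral _ _).trans
            (lintegral_mono fun s => setLIntegral_le_lintegral _ _)
      _ = ENNReal.ofReal c * ∑ i ∈ A, ∫⁻ s, ∫⁻ t,
          ENNReal.ofReal (kerG (ξ i) (ξ (i + 1) - ξ i) Q s (t - s)) := by
          have e1 : ∀ s, ∫⁻ t, ENNReal.ofReal c *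
              ∑ i ∈ A, ENNReal.ofReal (kerG (ξ i) (ξ (i + 1) - ξ i) Q s (t - s)) =
              ENNReal.ofReal c * ∑ i ∈ A, ∫⁻ t,
                ENNReal.ofReal (kerG (ξ i) (ξ (i + 1) - ξ i) Q s (t - s)) := by
            intro s
            rw [lintegral_const_mul' _ _ ENNReal.ofReal_ne_top, lintegral_finsetSum]
            exact fun i _ => (hmeas i).comp (by fun_prop : Measurable fun t : ℝ => (s, t))
          simp_rw [e1]
          rw [lintegral_const_mul' _ _ ENNReal.ofReal_ne_top, lintegral_finsetSum]
          exact fun i _ => (hmeas i).lintegral_prod_right'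
      _ ≤ ENNReal.ofReal c * ∑ i ∈ A, ENNReal.ofReal (30 * L) := by
          gcongr with i hi
          have hir := Finset.mem_range.mp (Finset.mem_filter.mp hi).1
          exact (double_kerG (by linarith [hmono i hir]) (hQ i hir)).trans
            (ENNReal.ofReal_le_ofReal (hker i hir))
      _ = _ := by
          rw [← ENNReal.ofReal_sum_of_nonneg (fun i _ => by linarith), ← ENNReal.ofReal_mul hc0,
            Finset.sum_const, nsmul_eq_mul]
  have hfin : ‖∫ s in Ioo (ξ 0) (ξ r), ∫ t in Ioo (ξ 0) (ξ r),
      (v s - v t) ^ 2 / (s - t) ^ 2‖ₑ ≤ ENNReal.ofReal (c * (A.card * (30 * L))) :=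
    (enorm_integral_le_lintegral_enorm _).trans
      ((lintegral_mono fun s => enorm_integral_le_lintegral_enorm _).trans hbound)
  have hcL : 0 ≤ c * (A.card * (30 * L)) := by positivity
  have hreal : (∫ s in Ioo (ξ 0) (ξ r), ∫ t in Ioo (ξ 0) (ξ r),
      (v s - v t) ^ 2 / (s - t) ^ 2) ≤ c * (A.card * (30 * L)) := by
    rw [Real.enorm_eq_ofReal_abs] at hfin
    exact (le_abs_self _).trans ((ENNReal.ofReal_le_ofReal_iff hcL).mp hfin)
  refine hreal.trans ?_
  have hsq : (A.card : ℝ) ^ 2 ≤ (2 * ((mBar : ℝ) + 1)) ^ 2 :=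
    pow_le_pow_left₀ (Nat.cast_nonneg _) hAcard 2
  calc c * (A.card * (30 * L)) = (A.card : ℝ) ^ 2 * (120 * M ^ 2 * L) := by rw [hcdef]; ring
    _ ≤ (2 * ((mBar : ℝ) + 1)) ^ 2 * (120 * M ^ 2 * L) :=
      mul_le_mul_of_nonneg_right hsq (by positivity)
    _ = _ := by ring
end

section
/- (Bramble–Hilbert, L² form) For every k ∈ ℕ and every ρ ∈ (0,1] there exists a constant C > 0 (depending only on k and ρ) with the following property: let E ⊂ ℝ² be a bounded open set with diameter h_E that is star-shaped with respect to an open ball of radius at least ρ·h_E contained in E, let r, s be integers with 0 ≤ r ≤ s ≤ k + 1, and let v : ℝ² → ℝ be smooth on a neighborhood of the closure of E. Then there exists a polynomial p of total degree ≤ k in two variables such that ∫_E ‖D^r(v − p)(x)‖² dx ≤ C · h_E^{2(s−r)} · ∫_E ‖D^s v(x)‖² dx, where D^j denotes the j-th iterated (Fréchet) derivative and ‖·‖ its operator/Hilbert–Schmidt norm. Moreover, if s ≥ 2, the same polynomial p satisfies sup_{x ∈ E} |v(x) − p(x)| ≤ C · h_E^{s−1} · ( ∫_E ‖D^s v(x)‖²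 dx )^{1/2}. -/
open MeasureTheory Set

abbrev V := EuclideanSpace ℝ (Fin 2)

theorem nat_le_inf (n : ℕ) : ((n : ℕ) : WithTop ℕ∞) ≤ ((⊤ : ℕ∞) : WithTop ℕ∞) :=
  WithTop.coe_le_coe.2 (le_top : (n : ℕ∞) ≤ ⊤)

theorem symm_aux {U : Set V} (hU : IsOpen U) {f : V → ℝ} (hf : ContDiffOn ℝ (⊤ : ℕ∞) f U) :
    ∀ (n : ℕ) (σ : Equiv.Perm (Fin n)) (x : V), x ∈ U → ∀ m : Fin n → V,
      iteratedFDeriv ℝ n f x (m ∘ σ) = iteratedFDeriv ℝ n f x m := by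
  have hfa : ∀ x ∈ U, ContDiffAt ℝ (⊤ : ℕ∞) f x := fun x hx => hf.contDiffAt (hU.mem_nhds hx)
  have hd : ∀ n : ℕ, ∀ x ∈ U, DifferentiableAt ℝ (iteratedFDeriv ℝ n f) x := fun n x hx =>
    (hfa x hx).differentiableAt_iteratedFDeriv (by exact_mod_cast (ENat.natCast_lt_top n))
  intro n
  induction n with
  | zero => 
    intro σ x hx m
    congr 1
    exact Subsingleton.elim _ _
  | succ n ih =>
    intro σ
    have hσ : σ ∈ Submonoid.closure (Set.range fun i : Fin n => Equiv.swap i.castSucc i.succ) := by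
      rw [Equiv.Perm.mclosure_swap_castSucc_succ]; trivial
    induction hσ using Submonoid.closure_induction with
    | one => intro x hx m; simp
    | mul a b ha hb h1 h2 =>
      intro x hx m
      have := h2 x hx (m ∘ a)
      rw [h1 x hx m] at this
      exact this
    | mem τ hτ =>
      obtain ⟨i, rfl⟩ := hτ
      intro x hx m
      cases n with
      | zero => exact i.elim0
      | succ n =>
      induction i using Fin.cases with
      | zero =>
        have h2 : ∀ m : Fin (n+2) → V, iteratedFDeriv ℝ (n+2) f x m =
            fderiv ℝ (fderiv ℝ (iteratedFDeriv ℝ n f)) x (m 0) (m 1) (Fin.tail (Fin.tail m)) := by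
          intro m
          rw [(hd (n+1) x hx).iteratedFDeriv_succ_apply_left']
          have h3 : (fun y => iteratedFDeriv ℝ (n+1) f y (Fin.tail m)) =ᶠ[nhds x]
              (fun y => fderiv ℝ (iteratedFDeriv ℝ n f) y (m 1) (Fin.tail (Fin.tail m))) := by
            filter_upwards with y
            rw [iteratedFDeriv_succ_apply_left]
            rfl
          rw [h3.fderiv_eq]
          have h4 : DifferentiableAt ℝ (fderiv ℝ (iteratedFDeriv ℝ n f)) x := by
            have : ContDiffAt ℝ 2 (iteratedFDeriv ℝ n f) x :=
              (hfa x hx).iteratedFDeriv_right (i := n) (by exact_mod_cast nat_le_inf (2 + n))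
            exact (this.fderiv_right (m := 1) (by norm_num)).differentiableAt (by norm_num)
          have h5 := (h4.hasFDerivAt.clm_apply (hasFDerivAt_const (m 1) x)).continuousMultilinear_apply_const (Fin.tail (Fin.tail m))
          rw [h5.fderiv]
          simp
        rw [h2, h2]
        have : ContDiffAt ℝ 2 (iteratedFDeriv ℝ n f) x :=
              (hfa x hx).iteratedFDeriv_right (i := n) (by exact_mod_cast nat_le_inf (2 + n))
        have hs := this.isSymmSndFDerivAt (by simp)
        have h6 := hs (m 0) (m 1)
        have e : Fin.tail (Fin.tail (m ∘ Equiv.swap (0 : Fin (n+1)).castSucc (0 : Fin (n+1)).succ)) = Fin.tail (Fin.tail m) := by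
          ext1 j
          simp only [Fin.tail, Function.comp]
          refine congrArg m ?_
          apply Equiv.swap_apply_of_ne_of_ne
          · exact Fin.succ_ne_zero _
          · intro h
            rw [Fin.succ_inj] at h
            exact Fin.succ_ne_zero _ h
        rw [e]
        have e0 : (m ∘ Equiv.swap (0 : Fin (n+1)).castSucc (0 : Fin (n+1)).succ) 0 = m 1 := by
          simp
        have e1 : (m ∘ Equiv.swap (0 : Fin (n+1)).castSucc (0 : Fin (n+1)).succ) 1 = m 0 := by
          simp
        rw [e0, e1, h6]
      | succ j =>
        rw [(hd (n+1) x hx).iteratedFDeriv_succ_apply_left', (hd (n+1) x hx).iteratedFDeriv_succ_apply_left']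
        have e0 : (m ∘ Equiv.swap j.succ.castSucc j.succ.succ) 0 = m 0 := by
          simp only [Function.comp]
          refine congrArg m ?_
          apply Equiv.swap_apply_of_ne_of_ne
          · rw [← Fin.succ_castSucc]; exact (Fin.succ_ne_zero _).symm
          · exact (Fin.succ_ne_zero _).symm
        have e : Fin.tail (m ∘ Equiv.swap j.succ.castSucc j.succ.succ) = Fin.tail m ∘ Equiv.swap j.castSucc j.succ := by
          ext1 i
          simp only [Fin.tail, Function.comp]
          refine congrArg m ?_
          rw [← Fin.succ_castSucc]
          exact ((Fin.succ_injective _).map_swap j.castSucc j.succ i).symm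
        rw [e0, e]
        congr 1
        apply Filter.EventuallyEq.fderiv_eq
        filter_upwards [hU.mem_nhds hx] with y hy
        exact ih _ y hy _

theorem poly_of_multilinear (n : ℕ) (A : ContinuousMultilinearMap ℝ (fun _ : Fin n => V) ℝ) (y : V) :
    ∃ p : MvPolynomial (Fin 2) ℝ, p.totalDegree ≤ n ∧
      ∀ x : V, MvPolynomial.eval (fun i => x i) p = A (fun _ => x - y) := by
  classical
  refine ⟨∑ f : Fin n → Fin 2, MvPolynomial.C (A fun l => EuclideanSpace.single (f l) (1:ℝ)) *
    ∏ l, (MvPolynomial.X (f l) - MvPolynomial.C (y (f l))), ?_, ?_⟩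
  · refine (MvPolynomial.totalDegree_finsetSum _ _).trans (Finset.sup_le fun f _ => ?_)
    refine (MvPolynomial.totalDegree_mul _ _).trans ?_
    rw [MvPolynomial.totalDegree_C, zero_add]
    refine (MvPolynomial.totalDegree_finsetProd _ _).trans ?_
    refine (Finset.sum_le_sum (g := fun _ => 1) fun l _ => ?_).trans (by simp)
    refine (MvPolynomial.totalDegree_sub _ _).trans ?_
    simp
  · intro x
    have hx : x - y = ∑ i : Fin 2, (x i - y i) • EuclideanSpace.single i (1:ℝ) := by
      ext j
      fin_cases j <;> simp [Fin.sum_univ_two]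
    conv_rhs => rw [hx]
    have := A.toMultilinearMap.map_sum (fun (_ : Fin n) (i : Fin 2) => (x i - y i) • (EuclideanSpace.single i (1:ℝ) : V))
    refine Eq.trans ?_ this.symm
    rw [map_sum]
    refine Finset.sum_congr rfl fun f _ => ?_
    have h2 := A.toMultilinearMap.map_smul_univ (fun l => (x (f l) - y (f l))) (fun l => (EuclideanSpace.single (f l) (1:ℝ) : V))
    refine Eq.trans ?_ h2.symm
    simp [map_prod, mul_comm]

theorem taylor_poly {U : Set V} (hU : IsOpen U) {f : V → ℝ} (hf : ContDiffOn ℝ (⊤ : ℕ∞) f U)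
    (y : V) (hy : y ∈ U) (s : ℕ) :
    ∃ p : MvPolynomial (Fin 2) ℝ, p.totalDegree ≤ s - 1 ∧
      ContDiff ℝ (⊤ : ℕ∞) (fun x : V => MvPolynomial.eval (fun i => x i) p) ∧
      (∀ j < s, iteratedFDeriv ℝ j (fun x : V => MvPolynomial.eval (fun i => x i) p) y
        = iteratedFDeriv ℝ j f y) ∧
      ∀ x, iteratedFDeriv ℝ s (fun x : V => MvPolynomial.eval (fun i => x i) p) x = 0 := by
  classical
  let q : FormalMultilinearSeries ℝ V ℝ := fun j =>
    if j < s then ((j.factorial : ℝ)⁻¹) • iteratedFDeriv ℝ j f y else 0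
  choose P hP1 hP2 using fun j => poly_of_multilinear j (q j) y
  refine ⟨∑ j ∈ Finset.range s, P j, ?_, ?_⟩
  · refine (MvPolynomial.totalDegree_finsetSum _ _).trans (Finset.sup_le fun j hj => ?_)
    have := Finset.mem_range.1 hj
    exact (hP1 j).trans (by omega)
  have hev : (fun x : V => MvPolynomial.eval (fun i => x i) (∑ j ∈ Finset.range s, P j)) =
      fun x => ∑ j ∈ Finset.range s, q j (fun _ => x - y) := by
    ext x; rw [map_sum]; exact Finset.sum_congr rfl fun j _ => hP2 j x
  rw [hev]
  set g : V → ℝ := fun x => ∑ j ∈ Finset.range s, q j (fun _ => x - y) with hg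
  have hps : HasFiniteFPowerSeriesOnBall g q y s ⊤ := by
    apply HasFiniteFPowerSeriesOnBall.mk'
    · intro m hm; simp [q, not_lt.2 hm]
    · simp
    · intro z _; simp [g]
  refine ⟨?_, ?_, ?_⟩
  · apply ContDiff.sum
    intro j _
    apply (q j).contDiff.comp
    exact contDiff_pi.2 (fun i ↦ contDiff_id.sub contDiff_const)
  · intro j hj
    ext m
    rw [hps.toHasFPowerSeriesOnBall.iteratedFDeriv_eq_sum_of_completeSpace]
    have : ∀ σ : Equiv.Perm (Fin j), q j (fun i => m (σ i)) = (j.factorial : ℝ)⁻¹ * iteratedFDeriv ℝ j f y m := by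
      intro σ
      have := symm_aux hU hf j σ y hy m
      simp only [q, if_pos hj]
      rw [← this]; rfl
    rw [Finset.sum_congr rfl fun σ _ => this σ]
    simp [Fintype.card_perm]
    field_simp
  · have : ∀ k : ℕ, ∃ Q : FormalMultilinearSeries ℝ V _, HasFiniteFPowerSeriesOnBall (iteratedFDeriv ℝ k g) Q y (s - k) ⊤ := by
      intro k
      induction k with
      | zero =>
        rw [iteratedFDeriv_zero_eq_comp]
        exact ⟨_, (continuousMultilinearCurryFin0 ℝ V ℝ).symm.toContinuousLinearEquiv.toContinuousLinearMap.comp_hasFiniteFPowerSeriesOnBall hps⟩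
      | succ k ih =>
        obtain ⟨Q, hQ⟩ := ih
        rw [iteratedFDeriv_succ_eq_comp_left]
        exact ⟨_, (continuousMultilinearCurryLeftEquiv ℝ (fun _ : Fin (k+1) => V) ℝ).symm.toContinuousLinearEquiv.toContinuousLinearMap.comp_hasFiniteFPowerSeriesOnBall hQ.fderiv'⟩
    obtain ⟨Q, hQ⟩ := this s
    rw [Nat.sub_self] at hQ
    intro x
    exact hQ.eq_zero_of_bound_zero x (by simp)

theorem cs_aux {φ : ℝ → ℝ} (hφ : ContinuousOn φ (Icc 0 1)) :
    (∫ t in (0:ℝ)..1, φ t) ^ 2 ≤ ∫ t in (0:ℝ)..1, φ t ^ 2 := by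
  set c := ∫ t in (0:ℝ)..1, φ t with hc
  have hu : uIcc (0:ℝ) 1 = Icc 0 1 := uIcc_of_le zero_le_one
  have i1 : IntervalIntegrable φ volume 0 1 := ContinuousOn.intervalIntegrable (by rwa [hu])
  have i2 : IntervalIntegrable (fun t => φ t ^ 2) volume 0 1 :=
    ContinuousOn.intervalIntegrable (by rw [hu]; exact hφ.pow 2)
  have h0 : 0 ≤ ∫ t in (0:ℝ)..1, (φ t - c) ^ 2 :=
    intervalIntegral.integral_nonneg zero_le_one fun t _ => sq_nonneg _
  have h1 : ∫ t in (0:ℝ)..1, (φ t - c) ^ 2 = (∫ t in (0:ℝ)..1, φ t ^ 2) - 2 * c * c + c ^ 2 := by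
    have : ∀ t, (φ t - c) ^ 2 = (φ t ^ 2 - 2 * c * φ t) + c ^ 2 := fun t => by ring
    simp_rw [this]
    rw [intervalIntegral.integral_add (i2.sub (i1.const_mul _)) (by simp),
      intervalIntegral.integral_sub i2 (i1.const_mul _), intervalIntegral.integral_const_mul]
    simp [hc]
  rw [h1] at h0
  nlinarith

theorem cont_path {U : Set V} (hU : IsOpen U) {f : V → ℝ} (hf : ContDiffOn ℝ (⊤ : ℕ∞) f U)
    {x y : V} (hseg : ∀ t ∈ Icc (0:ℝ) 1, y + t • (x - y) ∈ U) (j : ℕ) :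
    ContinuousOn (fun t : ℝ => iteratedFDeriv ℝ j f (y + t • (x - y))) (Icc 0 1) := by
  intro t ht
  have h1 : ContinuousAt (iteratedFDeriv ℝ j f) (y + t • (x - y)) :=
    (hf.contDiffAt (hU.mem_nhds (hseg t ht))).continuousAt_iteratedFDeriv (nat_le_inf j)
  have h2 : ContinuousAt (fun t : ℝ => y + t • (x - y)) t := by fun_prop
  exact (ContinuousAt.comp (g := iteratedFDeriv ℝ j f) (f := fun t : ℝ => y + t • (x - y)) h1 h2).continuousWithinAt

theorem path_step {U : Set V} (hU : IsOpen U) {f : V → ℝ} (hf : ContDiffOn ℝ (⊤ : ℕ∞) f U)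
    {x y : V} {h : ℝ} (hseg : ∀ t ∈ Icc (0:ℝ) 1, y + t • (x - y) ∈ U) (hxy : ‖x - y‖ ≤ h)
    (j : ℕ) (h0 : iteratedFDeriv ℝ j f y = 0) (t : ℝ) (ht : t ∈ Icc (0:ℝ) 1) :
    ‖iteratedFDeriv ℝ j f (y + t • (x - y))‖ ≤
      h * ∫ τ in (0:ℝ)..t, ‖iteratedFDeriv ℝ (j+1) f (y + τ • (x - y))‖ := by
  have hh : 0 ≤ h := (norm_nonneg _).trans hxy
  have hsub : uIcc 0 t ⊆ Icc (0:ℝ) 1 := by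
    rw [uIcc_of_le ht.1]; exact Icc_subset_Icc_right ht.2
  have hfa : ∀ τ ∈ Icc (0:ℝ) 1, ContDiffAt ℝ (⊤ : ℕ∞) f (y + τ • (x - y)) :=
    fun τ hτ => hf.contDiffAt (hU.mem_nhds (hseg τ hτ))
  have hderiv : ∀ τ ∈ uIcc 0 t, HasDerivAt (fun τ : ℝ => iteratedFDeriv ℝ j f (y + τ • (x - y)))
      (fderiv ℝ (iteratedFDeriv ℝ j f) (y + τ • (x - y)) (x - y)) τ := by
    intro τ hτ
    have hd : DifferentiableAt ℝ (iteratedFDeriv ℝ j f) (y + τ • (x - y)) :=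
      (hfa τ (hsub hτ)).differentiableAt_iteratedFDeriv (by exact_mod_cast (ENat.natCast_lt_top j))
    have hl : HasDerivAt (fun τ : ℝ => y + τ • (x - y)) (x - y) τ := by
      simpa using ((hasDerivAt_id τ).smul_const (x - y)).const_add y
    exact hd.hasFDerivAt.comp_hasDerivAt τ hl
  have hc : ContinuousOn (fun τ : ℝ => fderiv ℝ (iteratedFDeriv ℝ j f) (y + τ • (x - y)) (x - y)) (uIcc 0 t) := by
    intro τ hτ
    have h1 : ContDiffAt ℝ 1 (iteratedFDeriv ℝ j f) (y + τ • (x - y)) :=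
      (hfa τ (hsub hτ)).iteratedFDeriv_right (i := j) (by exact_mod_cast nat_le_inf (1 + j))
    have h1' : ContinuousAt (fderiv ℝ (iteratedFDeriv ℝ j f)) (y + τ • (x - y)) :=
      (h1.fderiv_right (m := 0) (by norm_num)).continuousAt
    have h2 : ContinuousAt (fun t : ℝ => y + t • (x - y)) τ := by fun_prop
    have h3 := ContinuousAt.comp (g := fderiv ℝ (iteratedFDeriv ℝ j f)) (f := fun t : ℝ => y + t • (x - y)) h1' h2
    exact (h3.clm_apply continuousAt_const).continuousWithinAt
  have hftc := intervalIntegral.integral_eq_sub_of_hasDerivAt hderiv hc.intervalIntegrable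
  simp only [zero_smul, add_zero, h0, sub_zero] at hftc
  rw [← hftc, ← intervalIntegral.integral_const_mul]
  refine intervalIntegral.norm_integral_le_of_norm_le ht.1 ?_ ?_
  · filter_upwards with τ hτ
    refine (ContinuousLinearMap.le_opNorm _ _).trans ?_
    rw [norm_fderiv_iteratedFDeriv, mul_comm]
    gcongr
  · exact (((cont_path hU hf hseg (j+1)).mono hsub).norm.const_smul h).intervalIntegrable

theorem path_iter {U : Set V} (hU : IsOpen U) {f : V → ℝ} (hf : ContDiffOn ℝ (⊤ : ℕ∞) f U)
    {x y : V} {h : ℝ} (hseg : ∀ t ∈ Icc (0:ℝ) 1, y + t • (x - y) ∈ U) (hxy : ‖x - y‖ ≤ h)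
    (s : ℕ) (h0 : ∀ j < s, iteratedFDeriv ℝ j f y = 0) (d : ℕ) :
    d + 1 ≤ s → ∀ t ∈ Icc (0:ℝ) 1, ‖iteratedFDeriv ℝ (s - 1 - d) f (y + t • (x - y))‖ ≤
      h ^ (d + 1) * ∫ τ in (0:ℝ)..1, ‖iteratedFDeriv ℝ s f (y + τ • (x - y))‖ := by
  have hh : 0 ≤ h := (norm_nonneg _).trans hxy
  set I := ∫ τ in (0:ℝ)..1, ‖iteratedFDeriv ℝ s f (y + τ • (x - y))‖
  have hI : 0 ≤ I := intervalIntegral.integral_nonneg zero_le_one fun t _ => norm_nonneg _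
  induction d with
  | zero =>
    intro hd t ht
    have := path_step hU hf hseg hxy (s - 1) (h0 _ (by omega)) t ht
    rw [Nat.sub_add_cancel (by omega)] at this
    refine this.trans ?_
    rw [zero_add, pow_one]
    gcongr
    refine intervalIntegral.integral_mono_interval le_rfl ht.1 ht.2 ?_ ?_
    · filter_upwards with τ using norm_nonneg _
    · apply ContinuousOn.intervalIntegrable
      rw [uIcc_of_le zero_le_one]
      exact (cont_path hU hf hseg s).norm
  | succ d ih =>
    intro hd t ht
    have := path_step hU hf hseg hxy (s - 1 - (d + 1)) (h0 _ (by omega)) t ht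
    rw [show s - 1 - (d + 1) + 1 = s - 1 - d by omega] at this
    refine this.trans ?_
    rw [pow_succ' h (d+1), mul_assoc]
    gcongr
    have hsub : uIcc 0 t ⊆ Icc (0:ℝ) 1 := by
      rw [uIcc_of_le ht.1]; exact Icc_subset_Icc_right ht.2
    calc _ ≤ ∫ τ in (0:ℝ)..t, h ^ (d + 1) * I := by
          refine intervalIntegral.integral_mono_on ht.1 ?_ (by simp) ?_
          · exact ((cont_path hU hf hseg (s-1-d)).mono hsub).norm.intervalIntegrable
          · intro τ hτ
            exact ih (by omega) τ ⟨hτ.1, hτ.2.trans ht.2⟩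
      _ = t * (h ^ (d + 1) * I) := by simp; ring
      _ ≤ 1 * (h ^ (d + 1) * I) := by gcongr; exact ht.2
      _ = _ := one_mul _

theorem path_bound {U : Set V} (hU : IsOpen U) {f : V → ℝ} (hf : ContDiffOn ℝ (⊤ : ℕ∞) f U)
    {x y : V} {h : ℝ} (hseg : ∀ t ∈ Icc (0:ℝ) 1, y + t • (x - y) ∈ U) (hxy : ‖x - y‖ ≤ h)
    (s : ℕ) (h0 : ∀ j < s, iteratedFDeriv ℝ j f y = 0) (j : ℕ) (hj : j < s) :
    ‖iteratedFDeriv ℝ j f x‖ ^ 2 ≤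
      h ^ (2 * (s - j)) * ∫ τ in (0:ℝ)..1, ‖iteratedFDeriv ℝ s f (y + τ • (x - y))‖ ^ 2 := by
  have hh : 0 ≤ h := (norm_nonneg _).trans hxy
  have := path_iter hU hf hseg hxy s h0 (s - 1 - j) (by omega) 1 (by simp)
  rw [show s - 1 - (s - 1 - j) = j by omega, show s - 1 - j + 1 = s - j by omega] at this
  rw [one_smul, add_sub_cancel] at this
  calc _ ≤ (h ^ (s - j) * ∫ τ in (0:ℝ)..1, ‖iteratedFDeriv ℝ s f (y + τ • (x - y))‖) ^ 2 := by
        gcongr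
    _ = h ^ (2 * (s - j)) * (∫ τ in (0:ℝ)..1, ‖iteratedFDeriv ℝ s f (y + τ • (x - y))‖) ^ 2 := by
        rw [mul_pow, ← pow_mul, mul_comm 2]
    _ ≤ _ := by
        gcongr
        exact cs_aux (cont_path hU hf hseg s).norm

theorem sup_bound {U : Set V} (hU : IsOpen U) {f : V → ℝ} (hf : ContDiffOn ℝ (⊤ : ℕ∞) f U)
    {x y : V} {h : ℝ} (hseg : ∀ t ∈ Icc (0:ℝ) 1, y + t • (x - y) ∈ U) (hxy : ‖x - y‖ ≤ h) :
    f x ^ 2 ≤ 3 * (‖iteratedFDeriv ℝ 0 f y‖ ^ 2 + h ^ 2 * ‖iteratedFDeriv ℝ 1 f y‖ ^ 2 +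
      h ^ 4 * ∫ t in (0:ℝ)..1, ((1 - t) * ‖iteratedFDeriv ℝ 2 f (y + t • (x - y))‖) ^ 2) := by
  have hh : 0 ≤ h := (norm_nonneg _).trans hxy
  have hT := map_add_eq_sum_add_integral_iteratedFDeriv (n := 1) (f := f) (x := y) (y := x - y)
    (fun t ht => (hf.contDiffAt (hU.mem_nhds (hseg t ht))).of_le (by exact_mod_cast nat_le_inf 2))
  simp only [add_sub_cancel, Finset.sum_range_succ, Finset.sum_range_zero, Nat.factorial,
    zero_add, Nat.cast_one, inv_one, one_smul, mul_one, pow_one, Nat.reduceAdd] at hT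
  set a := iteratedFDeriv ℝ 0 f y (fun _ => x - y)
  set b := iteratedFDeriv ℝ 1 f y (fun _ => x - y)
  set c := ∫ t in (0:ℝ)..1, (1 - t) • iteratedFDeriv ℝ 2 f (y + t • (x - y)) (fun _ => x - y)
  have ha : a ^ 2 ≤ ‖iteratedFDeriv ℝ 0 f y‖ ^ 2 := by
    have := (iteratedFDeriv ℝ 0 f y).le_opNorm (fun _ => x - y)
    simp only [Finset.univ_eq_empty, Finset.prod_empty, mul_one] at this
    rw [← sq_abs a]
    gcongr
    exact this
  have hb : b ^ 2 ≤ h ^ 2 * ‖iteratedFDeriv ℝ 1 f y‖ ^ 2 := by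
    have := (iteratedFDeriv ℝ 1 f y).le_opNorm (fun _ => x - y)
    simp only [Finset.univ_unique, Finset.prod_const, Finset.card_singleton, pow_one] at this
    rw [← sq_abs b, ← mul_pow, mul_comm h]
    gcongr
    exact this.trans (by gcongr)
  set φ : ℝ → ℝ := fun t => (1 - t) * ‖iteratedFDeriv ℝ 2 f (y + t • (x - y))‖
  have hφ : ContinuousOn φ (Icc 0 1) :=
    (continuousOn_const.sub continuousOn_id).mul (cont_path hU hf hseg 2).norm
  have hc : |c| ≤ h ^ 2 * ∫ t in (0:ℝ)..1, φ t := by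
    rw [← intervalIntegral.integral_const_mul]
    refine intervalIntegral.norm_integral_le_of_norm_le (f := fun t : ℝ => (1 - t) • iteratedFDeriv ℝ 2 f (y + t • (x - y)) (fun _ => x - y)) zero_le_one ?_ ?_
    · filter_upwards with t ht
      have := (iteratedFDeriv ℝ 2 f (y + t • (x - y))).le_opNorm (fun _ => x - y)
      simp only [Finset.prod_const, Finset.card_univ, Fintype.card_fin] at this
      rw [norm_smul, Real.norm_of_nonneg (by linarith [ht.2] : 0 ≤ 1 - t)]
      have h1 : 0 ≤ 1 - t := by linarith [ht.2]
      calc _ ≤ (1 - t) * (‖iteratedFDeriv ℝ 2 f (y + t • (x - y))‖ * ‖x - y‖ ^ 2) := by gcongr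
        _ ≤ (1 - t) * (‖iteratedFDeriv ℝ 2 f (y + t • (x - y))‖ * h ^ 2) := by gcongr
        _ = _ := by simp only [φ]; ring
    · apply ContinuousOn.intervalIntegrable
      rw [uIcc_of_le zero_le_one]
      exact continuousOn_const.mul hφ
  have hc2 : c ^ 2 ≤ h ^ 4 * ∫ t in (0:ℝ)..1, φ t ^ 2 := by
    calc c ^ 2 = |c| ^ 2 := (sq_abs c).symm
      _ ≤ (h ^ 2 * ∫ t in (0:ℝ)..1, φ t) ^ 2 := by gcongr
      _ = h ^ 4 * (∫ t in (0:ℝ)..1, φ t) ^ 2 := by ring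
      _ ≤ _ := by gcongr; exact cs_aux hφ
  rw [hT]
  nlinarith [sq_nonneg (a - b), sq_nonneg (b - c), sq_nonneg (a - c)]

theorem lint_affine (G : V → ENNReal) (hG : Measurable G) (a : ℝ) (ha : a ≠ 0) (c : V) :
    ∫⁻ x, G (c + a • x) = ENNReal.ofReal ((a ^ 2)⁻¹) * ∫⁻ x, G x := by
  have h1 : ∫⁻ x, G (c + a • x) = ∫⁻ x, G (c + x) ∂(Measure.map (fun x : V => a • x) volume) := by
    rw [lintegral_map (by fun_prop) (by fun_prop)]
  rw [h1, Measure.map_addHaar_smul _ ha, lintegral_smul_measure, lintegral_add_left_eq_self]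
  simp [abs_of_nonneg (sq_nonneg a)]

theorem avg_aux (G : V → ENNReal) (hG : Measurable G) (B E : Set V) (hBE : B ⊆ E)
    (t : ℝ) (ht : t ∈ Ioc (0:ℝ) 1) :
    ∫⁻ y in B, ∫⁻ x in E, G (y + t • (x - y)) ≤ 4 * volume E * ∫⁻ x, G x := by
  by_cases h : t ≤ 1 / 2
  · rw [lintegral_lintegral_swap (by fun_prop)]
    calc ∫⁻ x in E, ∫⁻ y in B, G (y + t • (x - y)) ≤ ∫⁻ x in E, 4 * ∫⁻ z, G z := by
          refine lintegral_mono fun x => ?_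
          calc ∫⁻ y in B, G (y + t • (x - y)) ≤ ∫⁻ y, G (y + t • (x - y)) := setLIntegral_le_lintegral _ _
            _ = ∫⁻ y, G (t • x + (1 - t) • y) := by
              congr 1; ext y; congr 1; module
            _ = ENNReal.ofReal (((1 - t) ^ 2)⁻¹) * ∫⁻ z, G z := lint_affine G hG _ (by linarith) _
            _ ≤ _ := by
              gcongr
              rw [← ENNReal.ofReal_ofNat]
              apply ENNReal.ofReal_le_ofReal
              rw [inv_le_comm₀ (by nlinarith) (by norm_num)]
              nlinarith
      _ = _ := by simp; ring
  · push Not at h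
    calc ∫⁻ y in B, ∫⁻ x in E, G (y + t • (x - y)) ≤ ∫⁻ y in B, 4 * ∫⁻ z, G z := by
          refine lintegral_mono fun y => ?_
          calc ∫⁻ x in E, G (y + t • (x - y)) ≤ ∫⁻ x, G (y + t • (x - y)) := setLIntegral_le_lintegral _ _
            _ = ∫⁻ x, G ((1 - t) • y + t • x) := by
              congr 1; ext x; congr 1; module
            _ = ENNReal.ofReal ((t ^ 2)⁻¹) * ∫⁻ z, G z := lint_affine G hG _ (by linarith) _
            _ ≤ _ := by
              gcongr
              rw [← ENNReal.ofReal_ofNat]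
              apply ENNReal.ofReal_le_ofReal
              rw [inv_le_comm₀ (by nlinarith) (by norm_num)]
              nlinarith
      _ = volume B * (4 * ∫⁻ z, G z) := by simp [mul_comm]
      _ ≤ volume E * (4 * ∫⁻ z, G z) := by gcongr
      _ = _ := by ring

theorem avg_bound (G : V → ENNReal) (hG : Measurable G) (B E : Set V) (hBE : B ⊆ E) :
    ∫⁻ y in B, ∫⁻ x in E, ∫⁻ t in Ioc (0:ℝ) 1, G (y + t • (x - y)) ≤
      4 * volume E * ∫⁻ x, G x := by
  have h1 : ∀ y : V, ∫⁻ x in E, ∫⁻ t in Ioc (0:ℝ) 1, G (y + t • (x - y)) =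
      ∫⁻ t in Ioc (0:ℝ) 1, ∫⁻ x in E, G (y + t • (x - y)) := fun y =>
    lintegral_lintegral_swap (by fun_prop)
  simp_rw [h1]
  rw [lintegral_lintegral_swap]
  · calc _ ≤ ∫⁻ t in Ioc (0:ℝ) 1, 4 * volume E * ∫⁻ x, G x :=
          setLIntegral_mono measurable_const fun t ht => avg_aux G hG B E hBE t ht
      _ = _ := by simp
  · apply Measurable.aemeasurable
    apply Measurable.lintegral_prod_right' (f := fun p : (V × ℝ) × V => G (p.1.1 + p.1.2 • (p.2 - p.1.1)))
    fun_prop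

theorem sup_kernel (G : V → ENNReal) (hG : Measurable G) (B : Set V) (x : V) :
    ∫⁻ y in B, ∫⁻ t in Ioc (0:ℝ) 1, ENNReal.ofReal ((1 - t) ^ 2) * G (y + t • (x - y)) ≤
      ∫⁻ x, G x := by
  rw [lintegral_lintegral_swap (by fun_prop)]
  calc _ ≤ ∫⁻ t in Ioc (0:ℝ) 1, ∫⁻ x, G x := by
        refine setLIntegral_mono measurable_const fun t ht => ?_
        by_cases h : t = 1
        · simp [h]
        have ht1 : 1 - t ≠ 0 := fun h' => h (by linarith)
        rw [lintegral_const_mul _ (by fun_prop)]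
        calc _ ≤ ENNReal.ofReal ((1 - t) ^ 2) * ∫⁻ y, G (y + t • (x - y)) := by
              exact mul_le_mul_right (setLIntegral_le_lintegral _ _) _
          _ = ENNReal.ofReal ((1 - t) ^ 2) * ∫⁻ y, G (t • x + (1 - t) • y) := by
              congr 2; ext y; congr 1; module
          _ = ∫⁻ x, G x := by
              rw [lint_affine G hG _ ht1, ← mul_assoc, ← ENNReal.ofReal_mul (sq_nonneg _),
                mul_inv_cancel₀ (pow_ne_zero 2 ht1)]
              simp
          _ ≤ _ := le_rfl
    _ = _ := by simp

theorem integ {U E : Set V} (hU : IsOpen U) (hEb : Bornology.IsBounded E) (hEU : closure E ⊆ U)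
    {f : V → ℝ} (hf : ContDiffOn ℝ (⊤ : ℕ∞) f U) (j : ℕ) :
    IntegrableOn (fun x => ‖iteratedFDeriv ℝ j f x‖ ^ 2) E := by
  have hc : IsCompact (closure E) := hEb.isCompact_closure
  refine IntegrableOn.mono_set (ContinuousOn.integrableOn_compact hc ?_) subset_closure
  intro x hx
  have h1 : ContinuousAt (iteratedFDeriv ℝ j f) x :=
    (hf.contDiffAt (hU.mem_nhds (hEU hx))).continuousAt_iteratedFDeriv (nat_le_inf j)
  exact (h1.norm.pow 2).continuousWithinAt

theorem meas_ind {U E : Set V} (hU : IsOpen U) (hE : IsOpen E) (hEU : closure E ⊆ U)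
    {f : V → ℝ} (hf : ContDiffOn ℝ (⊤ : ℕ∞) f U) (j : ℕ) :
    Measurable (E.indicator (fun x => ENNReal.ofReal (‖iteratedFDeriv ℝ j f x‖ ^ 2))) := by
  classical
  rw [← Set.piecewise_eq_indicator]
  refine ContinuousOn.measurable_piecewise ?_ continuousOn_const hE.measurableSet
  intro x hx
  have h1 : ContinuousAt (iteratedFDeriv ℝ j f) x :=
    (hf.contDiffAt (hU.mem_nhds (hEU (subset_closure hx)))).continuousAt_iteratedFDeriv (nat_le_inf j)
  exact (ENNReal.continuous_ofReal.continuousAt.comp (h1.norm.pow 2)).continuousWithinAt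

theorem lint_eq {U E : Set V} (hU : IsOpen U) (hE : IsOpen E) (hEb : Bornology.IsBounded E) (hEU : closure E ⊆ U)
    {f : V → ℝ} (hf : ContDiffOn ℝ (⊤ : ℕ∞) f U) (j : ℕ) :
    ∫⁻ x, (E.indicator (fun x => ENNReal.ofReal (‖iteratedFDeriv ℝ j f x‖ ^ 2))) x =
      ENNReal.ofReal (∫ x in E, ‖iteratedFDeriv ℝ j f x‖ ^ 2) := by
  rw [lintegral_indicator hE.measurableSet, ofReal_integral_eq_lintegral_ofReal (integ hU hEb hEU hf j)]
  filter_upwards with x using sq_nonneg _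

theorem ofReal_path {φ : ℝ → ℝ} (hφ : ContinuousOn φ (Icc 0 1)) (h0 : ∀ t ∈ Icc (0:ℝ) 1, 0 ≤ φ t) :
    ENNReal.ofReal (∫ t in (0:ℝ)..1, φ t) = ∫⁻ t in Ioc (0:ℝ) 1, ENNReal.ofReal (φ t) := by
  rw [intervalIntegral.integral_of_le zero_le_one, ofReal_integral_eq_lintegral_ofReal]
  · exact (hφ.integrableOn_compact isCompact_Icc).mono_set Ioc_subset_Icc_self
  · filter_upwards [self_mem_ae_restrict measurableSet_Ioc] with t ht
    exact h0 t (Ioc_subset_Icc_self ht)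

theorem core1 {U E B : Set V} (hU : IsOpen U) (hE : IsOpen E) (hEb : Bornology.IsBounded E)
    (hEU : closure E ⊆ U) (hBE : B ⊆ E) {K : ℝ} (hK : 0 ≤ K)
    (hB0 : volume B ≠ 0) (hBt : volume B ≠ ⊤)
    (hK2 : 4 * volume E ≤ ENNReal.ofReal K * volume B)
    (hst : ∀ x ∈ E, ∀ y ∈ B, ∀ t ∈ Icc (0:ℝ) 1, y + t • (x - y) ∈ E)
    {v : V → ℝ} (hv : ContDiffOn ℝ (⊤ : ℕ∞) v U) (s : ℕ) :
    ∃ y ∈ B, ∀ w : V → ℝ, ContDiffOn ℝ (⊤ : ℕ∞) w U → (∀ j < s, iteratedFDeriv ℝ j w y = 0) →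
      (∀ x ∈ E, iteratedFDeriv ℝ s w x = iteratedFDeriv ℝ s v x) → ∀ j < s,
      ∫ x in E, ‖iteratedFDeriv ℝ j w x‖ ^ 2 ≤
        K * Metric.diam E ^ (2 * (s - j)) * ∫ x in E, ‖iteratedFDeriv ℝ s v x‖ ^ 2 := by
  set h := Metric.diam E
  set G := E.indicator (fun x => ENNReal.ofReal (‖iteratedFDeriv ℝ s v x‖ ^ 2)) with hGdef
  have hG : Measurable G := meas_ind hU hE hEU hv s
  set Φ : V → ENNReal := fun y => ∫⁻ x in E, ∫⁻ t in Ioc (0:ℝ) 1, G (y + t • (x - y)) with hΦ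
  have hΦm : Measurable Φ := by
    apply Measurable.lintegral_prod_right' (f := fun p : V × V => ∫⁻ t in Ioc (0:ℝ) 1, G (p.1 + t • (p.2 - p.1)))
    apply Measurable.lintegral_prod_right' (f := fun q : (V × V) × ℝ => G (q.1.1 + q.2 • (q.1.2 - q.1.1)))
    fun_prop
  obtain ⟨y, hy, hle⟩ := exists_le_setLAverage hB0 hBt hΦm.aemeasurable
  have hΦy : Φ y ≤ ENNReal.ofReal K * ∫⁻ x, G x := by
    refine hle.trans ?_
    rw [setLAverage_eq]
    apply ENNReal.div_le_of_le_mul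
    refine (avg_bound G hG B E hBE).trans ?_
    calc _ ≤ ENNReal.ofReal K * volume B * ∫⁻ x, G x := by gcongr
      _ = _ := by ring
  refine ⟨y, hy, fun w hw hw0 hws j hj => ?_⟩
  have hh : 0 ≤ h := Metric.diam_nonneg
  have hI : 0 ≤ ∫ x in E, ‖iteratedFDeriv ℝ s v x‖ ^ 2 := integral_nonneg fun x => sq_nonneg _
  rw [← ENNReal.ofReal_le_ofReal_iff (by positivity),
    ofReal_integral_eq_lintegral_ofReal (integ hU hEb hEU hw j) (by filter_upwards with x using sq_nonneg _)]
  calc ∫⁻ x in E, ENNReal.ofReal (‖iteratedFDeriv ℝ j w x‖ ^ 2)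
      ≤ ∫⁻ x in E, ENNReal.ofReal (h ^ (2 * (s - j))) * ∫⁻ t in Ioc (0:ℝ) 1, G (y + t • (x - y)) := by
        refine setLIntegral_mono' hE.measurableSet fun x hx => ?_
        have hseg : ∀ t ∈ Icc (0:ℝ) 1, y + t • (x - y) ∈ U := fun t ht =>
          hEU (subset_closure (hst x hx y hy t ht))
        have hxy : ‖x - y‖ ≤ h := by
          rw [← dist_eq_norm]; exact Metric.dist_le_diam_of_mem hEb hx (hBE hy)
        refine (ENNReal.ofReal_le_ofReal (path_bound hU hw hseg hxy s hw0 j hj)).trans ?_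
        rw [ENNReal.ofReal_mul (by positivity)]
        gcongr
        rw [ofReal_path (φ := fun t => ‖iteratedFDeriv ℝ s w (y + t • (x - y))‖ ^ 2) ((cont_path hU hw hseg s).norm.pow 2) (fun _ _ => sq_nonneg _)]
        refine setLIntegral_mono' measurableSet_Ioc fun t ht => ?_
        have hm := hst x hx y hy t (Ioc_subset_Icc_self ht)
        rw [hGdef, indicator_of_mem hm, hws _ hm]
    _ = ENNReal.ofReal (h ^ (2 * (s - j))) * Φ y := by
        rw [lintegral_const_mul]
        apply Measurable.lintegral_prod_right' (f := fun q : V × ℝ => G (y + q.2 • (q.1 - y)))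
        fun_prop
    _ ≤ ENNReal.ofReal (h ^ (2 * (s - j))) * (ENNReal.ofReal K * ∫⁻ x, G x) := by gcongr
    _ = _ := by
        rw [lint_eq hU hE hEb hEU hv, ← ENNReal.ofReal_mul hK, ← ENNReal.ofReal_mul (by positivity)]
        congr 1; ring

theorem core2 {U E B : Set V} (hU : IsOpen U) (hE : IsOpen E) (hEb : Bornology.IsBounded E)
    (hEU : closure E ⊆ U) (hBo : IsOpen B) (hBE : B ⊆ E)
    (hst : ∀ x ∈ E, ∀ y ∈ B, ∀ t ∈ Icc (0:ℝ) 1, y + t • (x - y) ∈ E)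
    {w : V → ℝ} (hw : ContDiffOn ℝ (⊤ : ℕ∞) w U) (x : V) (hx : x ∈ E) {b : ℝ} (hb : 0 ≤ b)
    (hb2 : ENNReal.ofReal b ≤ volume B) :
    w x ^ 2 * b ≤ 3 * ((∫ x in E, ‖iteratedFDeriv ℝ 0 w x‖ ^ 2) +
      Metric.diam E ^ 2 * (∫ x in E, ‖iteratedFDeriv ℝ 1 w x‖ ^ 2) +
      Metric.diam E ^ 4 * (∫ x in E, ‖iteratedFDeriv ℝ 2 w x‖ ^ 2)) := by
  set h := Metric.diam E
  have hh : 0 ≤ h := Metric.diam_nonneg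
  set G : ℕ → V → ENNReal := fun j => E.indicator (fun x => ENNReal.ofReal (‖iteratedFDeriv ℝ j w x‖ ^ 2)) with hGdef
  have hG : ∀ j, Measurable (G j) := fun j => meas_ind hU hE hEU hw j
  have hI : ∀ j, 0 ≤ ∫ x in E, ‖iteratedFDeriv ℝ j w x‖ ^ 2 := fun j => integral_nonneg fun x => sq_nonneg _
  have h0 := hI 0
  have h1 := hI 1
  have h2 := hI 2
  rw [← ENNReal.ofReal_le_ofReal_iff (by positivity), ENNReal.ofReal_mul (sq_nonneg _),
    ENNReal.ofReal_mul (by norm_num), ENNReal.ofReal_add (by positivity) (by positivity),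
    ENNReal.ofReal_add (by positivity) (by positivity),
    ENNReal.ofReal_mul (by positivity), ENNReal.ofReal_mul (by positivity),
    ← lint_eq hU hE hEb hEU hw, ← lint_eq hU hE hEb hEU hw, ← lint_eq hU hE hEb hEU hw]
  calc ENNReal.ofReal (w x ^ 2) * ENNReal.ofReal b ≤ ENNReal.ofReal (w x ^ 2) * volume B := by gcongr
    _ = ∫⁻ y in B, ENNReal.ofReal (w x ^ 2) := by simp
    _ ≤ ∫⁻ y in B, ENNReal.ofReal 3 * (G 0 y + ENNReal.ofReal (h ^ 2) * G 1 y +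
          ENNReal.ofReal (h ^ 4) * ∫⁻ t in Ioc (0:ℝ) 1, ENNReal.ofReal ((1 - t) ^ 2) * G 2 (y + t • (x - y))) := by
        refine setLIntegral_mono' hBo.measurableSet fun y hy => ?_
        have hseg : ∀ t ∈ Icc (0:ℝ) 1, y + t • (x - y) ∈ U := fun t ht =>
          hEU (subset_closure (hst x hx y hy t ht))
        have hxy : ‖x - y‖ ≤ h := by
          rw [← dist_eq_norm]; exact Metric.dist_le_diam_of_mem hEb hx (hBE hy)
        refine (ENNReal.ofReal_le_ofReal (sup_bound hU hw hseg hxy)).trans ?_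
        have hi : 0 ≤ ∫ t in (0:ℝ)..1, ((1 - t) * ‖iteratedFDeriv ℝ 2 w (y + t • (x - y))‖) ^ 2 :=
          intervalIntegral.integral_nonneg zero_le_one fun t _ => sq_nonneg _
        rw [ENNReal.ofReal_mul (by norm_num), ENNReal.ofReal_add (by positivity) (by positivity),
          ENNReal.ofReal_add (by positivity) (by positivity),
          ENNReal.ofReal_mul (by positivity), ENNReal.ofReal_mul (by positivity)]
        have g0 : ∀ j, ∀ z ∈ E, G j z = ENNReal.ofReal (‖iteratedFDeriv ℝ j w z‖ ^ 2) := fun j z hz =>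
          indicator_of_mem hz _
        rw [g0 0 y (hBE hy), g0 1 y (hBE hy)]
        gcongr
        rw [ofReal_path (φ := fun t => ((1 - t) * ‖iteratedFDeriv ℝ 2 w (y + t • (x - y))‖) ^ 2) (((continuousOn_const.sub continuousOn_id).mul (cont_path hU hw hseg 2).norm).pow 2) (fun _ _ => sq_nonneg _)]
        refine setLIntegral_mono' measurableSet_Ioc fun t ht => ?_
        have hm := hst x hx y hy t (Ioc_subset_Icc_self ht)
        rw [g0 2 _ hm, ← ENNReal.ofReal_mul (sq_nonneg _), ← mul_pow]
    _ = ENNReal.ofReal 3 * ((∫⁻ y in B, G 0 y) + ENNReal.ofReal (h ^ 2) * (∫⁻ y in B, G 1 y) +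
          ENNReal.ofReal (h ^ 4) * ∫⁻ y in B, ∫⁻ t in Ioc (0:ℝ) 1, ENNReal.ofReal ((1 - t) ^ 2) * G 2 (y + t • (x - y))) := by
        have hm0 := hG 0
        have hm1 := hG 1
        have hm2 := hG 2
        have hm : Measurable fun y => ∫⁻ t in Ioc (0:ℝ) 1, ENNReal.ofReal ((1 - t) ^ 2) * G 2 (y + t • (x - y)) := by
          apply Measurable.lintegral_prod_right' (f := fun q : V × ℝ => ENNReal.ofReal ((1 - q.2) ^ 2) * G 2 (q.1 + q.2 • (x - q.1)))
          fun_prop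
        rw [lintegral_const_mul _ (by fun_prop), lintegral_add_right _ (by fun_prop),
          lintegral_add_right _ (by fun_prop), lintegral_const_mul _ (by fun_prop), lintegral_const_mul _ (by fun_prop)]
    _ ≤ _ := by
        refine mul_le_mul_right ?_ _
        refine add_le_add (add_le_add ?_ (mul_le_mul_right ?_ _)) (mul_le_mul_right ?_ _)
        · exact setLIntegral_le_lintegral _ _
        · exact setLIntegral_le_lintegral _ _
        · exact sup_kernel _ (hG 2) B x


/-- **Bramble–Hilbert, L² form.** For every `k ∈ ℕ` and `ρ ∈ (0,1]` there is
`C > 0` (depending only on `k` and `ρ`) such that: for every bounded open set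
`E ⊂ ℝ²` of diameter `h_E` that is star-shaped with respect to an open ball of radius at
least `ρ·h_E` contained in `E`, for all integers `0 ≤ r ≤ s ≤ k+1`, and every `v` smooth on
an open neighborhood `U` of the closure of `E`, there is a polynomial `p` of total degree
`≤ k` with `∫_E ‖D^r(v-p)‖² ≤ C · h_E^{2(s-r)} · ∫_E ‖D^s v‖²`; moreover if `s ≥ 2` the same
`p` satisfies `sup_E |v - p| ≤ C · h_E^{s-1} · (∫_E ‖D^s v‖²)^{1/2}`. -/
theorem bramble_hilbert (k : ℕ) (ρ : ℝ) (hρ0 : 0 < ρ) (hρ1 : ρ ≤ 1) :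
    ∃ C : ℝ, 0 < C ∧
      ∀ (E : Set (EuclideanSpace ℝ (Fin 2))), IsOpen E → Bornology.IsBounded E →
      -- `E` is star-shaped with respect to an open ball of radius `≥ ρ · h_E` contained in `E`
      (∃ (z : EuclideanSpace ℝ (Fin 2)) (ρ' : ℝ), 0 < ρ' ∧ ρ * Metric.diam E ≤ ρ' ∧
        Metric.ball z ρ' ⊆ E ∧
        ∀ x ∈ E, ∀ y ∈ Metric.ball z ρ', segment ℝ x y ⊆ E) →
      ∀ (r s : ℕ), r ≤ s → s ≤ k + 1 →
      ∀ (v : EuclideanSpace ℝ (Fin 2) → ℝ) (U : Set (EuclideanSpace ℝ (Fin 2))),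
        IsOpen U → closure E ⊆ U → ContDiffOn ℝ (⊤ : ℕ∞) v U →
      ∃ p : MvPolynomial (Fin 2) ℝ, p.totalDegree ≤ k ∧
        (∫ x in E,
            ‖iteratedFDerivWithin ℝ r
                (fun y => v y - MvPolynomial.eval (fun i => y i) p) U x‖ ^ 2) ≤
          C * Metric.diam E ^ (2 * (s - r)) *
            (∫ x in E, ‖iteratedFDerivWithin ℝ s v U x‖ ^ 2) ∧
        (2 ≤ s → ∀ x ∈ E,
          |v x - MvPolynomial.eval (fun i => x i) p| ≤
            C * Metric.diam E ^ (s - 1) *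
              (∫ x in E, ‖iteratedFDerivWithin ℝ s v U x‖ ^ 2) ^ ((1 : ℝ) / 2)) := by

  refine ⟨36 / ρ ^ 4, by positivity, ?_⟩
  intro E hE hEb ⟨z, ρ', hρ', hρh, hBE, hst0⟩ r s hrs hsk v U hU hEU hv
  set h := Metric.diam E with hh_def
  have hh0 : 0 ≤ h := Metric.diam_nonneg
  have hEU' : ∀ x ∈ E, x ∈ U := fun x hx => hEU (subset_closure hx)
  have hzE : z ∈ E := hBE (Metric.mem_ball_self hρ')
  have hρ4 : ρ ^ 4 ≤ 1 := pow_le_one₀ hρ0.le hρ1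
  have hρ2 : ρ ^ 2 ≤ 1 := pow_le_one₀ hρ0.le hρ1
  have hC36 : 36 ≤ 36 / ρ ^ 4 := by
    rw [le_div_iff₀ (by positivity)]; linarith
  have hWv : ∫ x in E, ‖iteratedFDerivWithin ℝ s v U x‖ ^ 2 = ∫ x in E, ‖iteratedFDeriv ℝ s v x‖ ^ 2 :=
    setIntegral_congr_fun hE.measurableSet fun x hx => by
      simp only [iteratedFDerivWithin_of_isOpen s hU (hEU' x hx)]
  rw [hWv]
  set I := ∫ x in E, ‖iteratedFDeriv ℝ s v x‖ ^ 2 with hIdef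
  have hI : 0 ≤ I := integral_nonneg fun x => sq_nonneg _
  -- volumes
  have hvolB : volume (Metric.ball z ρ') = ENNReal.ofReal (ρ' ^ 2 * Real.pi) := by
    rw [EuclideanSpace.volume_ball_fin_two, ENNReal.ofReal_mul (by positivity), ENNReal.ofReal_pow hρ'.le]
  have hvolE : volume E ≤ ENNReal.ofReal (h ^ 2 * Real.pi) := by
    have : E ⊆ Metric.closedBall z h := fun x hx => Metric.dist_le_diam_of_mem hEb hx hzE
    refine (measure_mono this).trans (le_of_eq ?_)
    rw [EuclideanSpace.volume_closedBall_fin_two, ENNReal.ofReal_mul (by positivity), ENNReal.ofReal_pow hh0]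
  have hB0 : volume (Metric.ball z ρ') ≠ 0 := (Metric.measure_ball_pos volume z hρ').ne'
  have hBt : volume (Metric.ball z ρ') ≠ ⊤ := measure_ball_lt_top.ne
  have hh : 0 < h := by
    rcases hh0.lt_or_eq with h1 | h1
    · exact h1
    · exfalso
      have := (measure_mono hBE).trans hvolE
      rw [← h1] at this
      simp at this
      rcases this with h2 | h2
      · exact absurd h2 hρ'.not_ge
      · exact absurd h2 Real.pi_pos.not_ge
  have hρρ : ρ ^ 2 * h ^ 2 ≤ ρ' ^ 2 := by
    rw [← mul_pow]; gcongr
  have hst : ∀ x ∈ E, ∀ y ∈ Metric.ball z ρ', ∀ t ∈ Icc (0:ℝ) 1, y + t • (x - y) ∈ E := by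
    intro x hx y hy t ht
    apply hst0 x hx y hy
    rw [segment_symm, segment_eq_image']
    exact ⟨t, ht, rfl⟩
  set K : ℝ := 4 / ρ ^ 2 with hK
  have hK0 : 0 ≤ K := by positivity
  have hK1 : 1 ≤ K := by rw [hK, le_div_iff₀ (by positivity)]; linarith
  have hK2 : 4 * volume E ≤ ENNReal.ofReal K * volume (Metric.ball z ρ') := by
    rw [hvolB, ← ENNReal.ofReal_mul hK0]
    calc _ ≤ 4 * ENNReal.ofReal (h ^ 2 * Real.pi) := by gcongr
      _ = ENNReal.ofReal (4 * (h ^ 2 * Real.pi)) := by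
        rw [ENNReal.ofReal_mul (p := 4) (by norm_num)]; simp
      _ ≤ _ := by
        apply ENNReal.ofReal_le_ofReal
        calc 4 * (h ^ 2 * Real.pi) = K * (ρ ^ 2 * h ^ 2 * Real.pi) := by rw [hK]; field_simp
          _ ≤ _ := by gcongr
  have hKC : K ≤ 36 / ρ ^ 4 := by
    rw [hK, div_le_div_iff₀ (by positivity) (by positivity)]
    nlinarith [sq_nonneg ρ, mul_le_mul_of_nonneg_left hρ2 (sq_nonneg ρ)]
  obtain ⟨y, hyB, hy⟩ := core1 hU hE hEb hEU hBE hK0 hB0 hBt hK2 hst hv s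
  obtain ⟨p, hp1, hp2, hp3, hp4⟩ := taylor_poly hU hv y (hEU' y (hBE hyB)) s
  set P : V → ℝ := fun x => MvPolynomial.eval (fun i => x i) p with hP
  set w : V → ℝ := v - P with hw
  have hwc : ContDiffOn ℝ (⊤ : ℕ∞) w U := hv.sub hp2.contDiffOn
  have hwsub : ∀ j : ℕ, ∀ x ∈ U, iteratedFDeriv ℝ j w x = iteratedFDeriv ℝ j v x - iteratedFDeriv ℝ j P x :=
    fun j x hx => iteratedFDeriv_sub_apply ((hv.contDiffAt (hU.mem_nhds hx)).of_le (nat_le_inf j))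
      (hp2.contDiffAt.of_le (nat_le_inf j))
  have hws : ∀ x ∈ E, iteratedFDeriv ℝ s w x = iteratedFDeriv ℝ s v x := fun x hx => by
    rw [hwsub s x (hEU' x hx), hp4, sub_zero]
  have hw0 : ∀ j < s, iteratedFDeriv ℝ j w y = 0 := fun j hj => by
    rw [hwsub j y (hEU' y (hBE hyB)), hp3 j hj, sub_self]
  have hmain : ∀ j ≤ s, ∫ x in E, ‖iteratedFDeriv ℝ j w x‖ ^ 2 ≤ K * h ^ (2 * (s - j)) * I := by
    intro j hj
    rcases hj.lt_or_eq with hj | rfl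
    · exact hy w hwc hw0 hws j hj
    · have : ∫ x in E, ‖iteratedFDeriv ℝ j w x‖ ^ 2 = I :=
        setIntegral_congr_fun hE.measurableSet fun x hx => by simp only [hws x hx]
      rw [this]
      simp only [Nat.sub_self, mul_zero, pow_zero, mul_one]
      nlinarith
  refine ⟨p, by omega, ?_, ?_⟩
  · have hWw : ∫ x in E, ‖iteratedFDerivWithin ℝ r (fun y => v y - MvPolynomial.eval (fun i => y i) p) U x‖ ^ 2
        = ∫ x in E, ‖iteratedFDeriv ℝ r w x‖ ^ 2 :=
      setIntegral_congr_fun hE.measurableSet fun x hx => by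
        simp only [iteratedFDerivWithin_of_isOpen r hU (hEU' x hx)]
        rfl
    rw [hWw]
    refine (hmain r hrs).trans ?_
    gcongr
  · intro hs2 x hx
    change |w x| ≤ _
    have hb2 : ENNReal.ofReal (ρ ^ 2 * h ^ 2 * Real.pi) ≤ volume (Metric.ball z ρ') := by
      rw [hvolB]; apply ENNReal.ofReal_le_ofReal; gcongr
    have h1 := core2 hU hE hEb hEU Metric.isOpen_ball hBE hst hwc x hx (by positivity) hb2
    rw [← hh_def] at h1
    have e0 := hmain 0 (by omega)
    have e1 := hmain 1 (by omega)
    have e2 := hmain 2 hs2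
    obtain ⟨m, rfl⟩ : ∃ m, s = m + 2 := ⟨s - 2, by omega⟩
    rw [show 2 * (m + 2 - 0) = 2 * m + 4 by omega] at e0
    rw [show 2 * (m + 2 - 1) = 2 * m + 2 by omega] at e1
    rw [show 2 * (m + 2 - 2) = 2 * m by omega] at e2
    rw [show m + 2 - 1 = m + 1 by omega]
    have h2 : w x ^ 2 * (ρ ^ 2 * h ^ 2 * Real.pi) ≤ 9 * K * h ^ (2 * m + 4) * I := by
      refine h1.trans ?_
      have f1 := mul_le_mul_of_nonneg_left e1 (by positivity : 0 ≤ h ^ 2)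
      have f2 := mul_le_mul_of_nonneg_left e2 (by positivity : 0 ≤ h ^ 4)
      rw [show h ^ 2 * (K * h ^ (2 * m + 2) * I) = K * h ^ (2 * m + 4) * I by ring] at f1
      rw [show h ^ 4 * (K * h ^ (2 * m) * I) = K * h ^ (2 * m + 4) * I by ring] at f2
      linarith
    have h3 : w x ^ 2 * (ρ ^ 2 * h ^ 2) ≤ 9 * K * h ^ (2 * m + 4) * I := by
      refine le_trans ?_ h2
      have : (1:ℝ) ≤ Real.pi := by linarith [Real.pi_gt_three]
      have h0 : 0 ≤ w x ^ 2 * (ρ ^ 2 * h ^ 2) := by positivity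
      nlinarith
    have h4 : w x ^ 2 ≤ 36 / ρ ^ 4 * h ^ (2 * m + 2) * I := by
      have hpos : 0 < ρ ^ 2 * h ^ 2 := by positivity
      refine le_of_mul_le_mul_right (h3.trans (le_of_eq ?_)) hpos
      rw [hK]; field_simp; ring
    have h5 : w x ^ 2 ≤ (36 / ρ ^ 4 * h ^ (m + 1) * Real.sqrt I) ^ 2 := by
      rw [mul_pow, Real.sq_sqrt hI]
      refine h4.trans ?_
      have : (36 / ρ ^ 4 * h ^ (m + 1)) ^ 2 = 36 / ρ ^ 4 * (36 / ρ ^ 4) * h ^ (2 * m + 2) := by ring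
      rw [this]
      gcongr
      nlinarith
    rw [← Real.sqrt_eq_rpow]
    exact abs_le_of_sq_le_sq h5 (by positivity)
end

section
/- For every k ∈ ℕ with k ≥ 1 there exists a constant C > 0 (depending only on k) with the following property: let 𝒯 be any mesh of a compact interval [a,b] with elements e_i = (x_{i−1}, x_i) and maximal element length h = max_i (x_i − x_{i−1}); let v : [a,b] → ℝ be (k+1)-times continuously differentiable, and let v_b ∈ 𝕊_k(𝒯) be the piecewise Lagrange interpolant of v of degree k, i.e. on each element e_i, v_b is the unique polynomial of degree ≤ k agreeing with v at the k + 1 equispaced points of the closed element [x_{i−1}, x_i] (including the two endpoints). Then the interpolation error e = v − v_b satisfies ∫_a^b ∫_a^b (e(x) − e(y))²/(x − y)² dx dy ≤ C · h^{2k+1} · ∫_a^b |v^{(k+1)}(t)|² dt. -/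
open MeasureTheory Set

lemma cs_aux_s8 {f : ℝ → ℝ} {c d : ℝ} (hcd : c < d) (h1 : IntervalIntegrable f volume c d)
    (h2 : IntervalIntegrable (fun t => f t ^ 2) volume c d) :
    (∫ t in c..d, f t) ^ 2 ≤ (d - c) * ∫ t in c..d, f t ^ 2 := by
  set I := ∫ t in c..d, f t with hI
  set m := I / (d - c) with hm
  have hL : 0 < d - c := by linarith
  have h0 : 0 ≤ ∫ t in c..d, (f t - m) ^ 2 :=
    intervalIntegral.integral_nonneg hcd.le (fun t _ => sq_nonneg _)
  have h3 : ∫ t in c..d, (f t - m) ^ 2 = (∫ t in c..d, f t ^ 2) - 2 * m * I + m ^ 2 * (d - c) := by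
    have : ∀ t, (f t - m) ^ 2 = (f t ^ 2 - 2 * m * f t) + m ^ 2 := fun t => by ring
    simp_rw [this]
    rw [intervalIntegral.integral_add (h2.sub (h1.const_mul _)) (by simp),
      intervalIntegral.integral_sub h2 (h1.const_mul _), intervalIntegral.integral_const_mul]
    simp [hI]; ring
  rw [h3] at h0
  have h4 : m * (d - c) = I := by rw [hm]; field_simp
  nlinarith

lemma ftc_aux {f f' : ℝ → ℝ} {c d : ℝ} (hf : ContinuousOn f (Icc c d))
    (hf' : ContinuousOn f' (Icc c d)) (hd : ∀ t ∈ Ioo c d, HasDerivAt f (f' t) t)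
    {x y : ℝ} (hx : x ∈ Icc c d) (hy : y ∈ Icc c d) : ∫ t in x..y, f' t = f y - f x := by
  have hs : uIcc x y ⊆ Icc c d := uIcc_subset_Icc hx hy
  refine integral_eq_of_hasDerivAt_off_countable f f' (s := ∅) countable_empty (hf.mono hs) ?_
    (hf'.mono hs).intervalIntegrable
  rintro t ⟨ht, -⟩
  exact hd t ⟨(le_min hx.1 hy.1).trans_lt ht.1, ht.2.trans_le (max_le hx.2 hy.2)⟩

lemma rolle_aux {f f' : ℝ → ℝ} {c d : ℝ} (hf : ContinuousOn f (Icc c d))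
    (hd : ∀ t ∈ Ioo c d, HasDerivAt f (f' t) t) (n : ℕ) (z : ℕ → ℝ)
    (hz : ∀ i ≤ n + 1, z i ∈ Icc c d ∧ f (z i) = 0) (hm : ∀ i < n + 1, z i < z (i + 1)) :
    ∃ y : ℕ → ℝ, (∀ i ≤ n, y i ∈ Icc c d ∧ f' (y i) = 0) ∧ ∀ i < n, y i < y (i + 1) := by
  have : ∀ i, ∃ y, i ≤ n → y ∈ Ioo (z i) (z (i + 1)) ∧ f' y = 0 := by
    intro i
    by_cases hi : i ≤ n
    · have a1 := hz i (by omega)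
      have a2 := hz (i + 1) (by omega)
      obtain ⟨y, hy, h0⟩ := exists_hasDerivAt_eq_zero (f := f) (f' := f') (hm i (by omega))
        (hf.mono (Icc_subset_Icc a1.1.1 a2.1.2)) (by rw [a1.2, a2.2])
        (fun x hx => hd x ⟨a1.1.1.trans_lt hx.1, hx.2.trans_le a2.1.2⟩)
      exact ⟨y, fun _ => ⟨hy, h0⟩⟩
    · exact ⟨0, fun h => absurd h hi⟩
  choose y hy using this
  refine ⟨y, fun i hi => ⟨⟨(hz i (by omega)).1.1.trans (hy i hi).1.1.le,
    (hy i hi).1.2.le.trans (hz (i + 1) (by omega)).1.2⟩, (hy i hi).2⟩, fun i hi => ?_⟩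
  exact (hy i hi.le).1.2.trans (hy (i + 1) hi).1.1

lemma chain_aux {c d : ℝ} (hcd : c < d) (n : ℕ) : ∀ (F : ℕ → ℝ → ℝ)
    (_ : ∀ j ≤ n + 1, ContinuousOn (F j) (Icc c d))
    (_ : ∀ j ≤ n, ∀ t ∈ Ioo c d, HasDerivAt (F j) (F (j + 1) t) t) (z : ℕ → ℝ)
    (_ : ∀ i ≤ n, z i ∈ Icc c d ∧ F 0 (z i) = 0) (_ : ∀ i < n, z i < z (i + 1)),
    ∀ t ∈ Icc c d, |F 0 t| ≤ (d - c) ^ n * ∫ t in c..d, |F (n + 1) t| := by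
  induction n with
  | zero =>
    intro F hc hd z hz hm t ht
    have h1 := ftc_aux (hc 0 (by omega)) (hc 1 (by omega)) (hd 0 le_rfl) (hz 0 le_rfl).1 ht
    rw [(hz 0 le_rfl).2, sub_zero] at h1
    have h2 := intervalIntegral.norm_integral_le_abs_integral_norm (f := F 1) (a := z 0) (b := t)
      (μ := volume)
    rw [h1] at h2
    have h3 := intervalIntegral.abs_integral_mono_interval (f := fun t => ‖F 1 t‖) (a := z 0)
      (b := t) (c := c) (d := d) (μ := volume) (by
        rw [uIoc, uIoc, min_eq_left hcd.le, max_eq_right hcd.le]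
        exact Ioc_subset_Ioc (le_min (hz 0 le_rfl).1.1 ht.1) (max_le (hz 0 le_rfl).1.2 ht.2))
      (by filter_upwards with x; exact norm_nonneg _)
      (by
        apply ContinuousOn.intervalIntegrable
        rw [uIcc_of_le hcd.le]
        exact (hc 1 (by omega)).norm)
    rw [abs_of_nonneg (a := ∫ t in c..d, ‖F 1 t‖) (intervalIntegral.integral_nonneg hcd.le (fun t _ => norm_nonneg _))] at h3
    simpa using h2.trans h3
  | succ n ih =>
    intro F hc hd z hz hm t ht
    obtain ⟨y, hy, hym⟩ := rolle_aux (hc 0 (by omega)) (hd 0 (by omega)) n z hz hm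
    have hB := ih (fun j => F (j + 1)) (fun j hj => hc (j + 1) (by omega))
      (fun j hj => hd (j + 1) (by omega)) y hy hym
    have h1 := ftc_aux (hc 0 (by omega)) (hc 1 (by omega)) (hd 0 (by omega)) (hz 0 (by omega)).1 ht
    rw [(hz 0 (by omega)).2, sub_zero] at h1
    have h2 := intervalIntegral.norm_integral_le_of_norm_le_const (f := F 1) (a := z 0) (b := t)
      (C := (d - c) ^ n * ∫ t in c..d, |F (n + 1 + 1) t|) (fun x hx =>
        hB x (uIcc_subset_Icc (hz 0 (by omega)).1 ht (uIoc_subset_uIcc hx)))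
    rw [h1, Real.norm_eq_abs] at h2
    refine h2.trans ?_
    have h3 : |t - z 0| ≤ d - c := by
      have := (hz 0 (by omega)).1
      rw [abs_le]; constructor <;> linarith [this.1, this.2, ht.1, ht.2]
    have h4 : 0 ≤ (d - c) ^ n * ∫ t in c..d, |F (n + 1 + 1) t| :=
      mul_nonneg (pow_nonneg (by linarith) _)
        (intervalIntegral.integral_nonneg hcd.le (fun t _ => abs_nonneg _))
    calc _ ≤ ((d - c) ^ n * ∫ t in c..d, |F (n + 1 + 1) t|) * (d - c) := by gcongr
      _ = _ := by ring

lemma chain_sq {c d : ℝ} (hcd : c < d) (n : ℕ) (F : ℕ → ℝ → ℝ)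
    (hc : ∀ j ≤ n + 1, ContinuousOn (F j) (Icc c d))
    (hd : ∀ j ≤ n, ∀ t ∈ Ioo c d, HasDerivAt (F j) (F (j + 1) t) t) (z : ℕ → ℝ)
    (hz : ∀ i ≤ n, z i ∈ Icc c d ∧ F 0 (z i) = 0) (hm : ∀ i < n, z i < z (i + 1)) 
    (t : ℝ) (ht : t ∈ Icc c d) :
    F 0 t ^ 2 ≤ (d - c) ^ (2 * n + 1) * ∫ t in c..d, F (n + 1) t ^ 2 := by
  have h := chain_aux hcd n F hc hd z hz hm t ht
  have hcn : ContinuousOn (F (n + 1)) (uIcc c d) := by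
    rw [uIcc_of_le hcd.le]; exact hc _ le_rfl
  have h2 := cs_aux_s8 hcd (f := fun t => |F (n + 1) t|) hcn.abs.intervalIntegrable
    (hcn.abs.pow 2).intervalIntegrable
  simp only [sq_abs] at h2
  calc F 0 t ^ 2 = |F 0 t| ^ 2 := (sq_abs _).symm
    _ ≤ ((d - c) ^ n * ∫ t in c..d, |F (n + 1) t|) ^ 2 := by gcongr
    _ = (d - c) ^ (2 * n) * (∫ t in c..d, |F (n + 1) t|) ^ 2 := by ring
    _ ≤ (d - c) ^ (2 * n) * ((d - c) * ∫ t in c..d, F (n + 1) t ^ 2) := by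
      gcongr
    _ = _ := by ring

lemma tail_aux {h : ℝ} (hh : 0 < h) :
    ∫⁻ d : ℝ, (Ioi h).indicator (fun d => ENNReal.ofReal (2 / d ^ 2)) d = ENNReal.ofReal (2 / h) := by
  rw [lintegral_indicator measurableSet_Ioi]
  have h1 := integral_Ioi_rpow_of_lt (a := -2) (by norm_num) hh
  have h2 := integrableOn_Ioi_rpow_of_lt (a := -2) (by norm_num) hh
  have h3 : ∀ t ∈ Ioi h, t ^ (-2 : ℝ) = 1 / t ^ 2 := by
    intro t ht
    have : 0 < t := hh.trans ht
    rw [Real.rpow_neg this.le]; simp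
  have h4 : ∫⁻ d in Ioi h, ENNReal.ofReal (2 / d ^ 2) = ∫⁻ d in Ioi h, ENNReal.ofReal (2 * d ^ (-2 : ℝ)) := by
    refine setLIntegral_congr_fun measurableSet_Ioi (fun t ht => ?_)
    rw [h3 t ht]; congr 1; ring
  rw [h4, ← ofReal_integral_eq_lintegral_ofReal (h2.const_mul 2), integral_const_mul, h1]
  · congr 1
    have : (-2 + 1 : ℝ) = -1 := by norm_num
    rw [this, Real.rpow_neg_one]; field_simp
  · filter_upwards [ae_restrict_mem measurableSet_Ioi] with t ht
    have : 0 < t := hh.trans ht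
    positivity

lemma kernel_bound (E G : ℝ → ENNReal) (hE : Measurable E) (hG : Measurable G) {h : ℝ} (hh : 0 < h)
    (W : ℝ → ℝ → ENNReal)
    (near : ∀ s d, |d| ≤ h → W s (s + d) ≤ ENNReal.ofReal (1 / |d|) * ∫⁻ τ in uIcc 0 d, G (s + τ))
    (far : ∀ s d, h < |d| → W s (s + d) ≤ ENNReal.ofReal (2 / d ^ 2) * (E s + E (s + d))) :
    ∫⁻ s, ∫⁻ t, W s t ≤ ENNReal.ofReal (2 * h) * (∫⁻ t, G t) + ENNReal.ofReal (8 / h) * ∫⁻ t, E t := by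
  set N : ℝ → ℝ → ENNReal := fun s d => ∫⁻ τ in uIcc 0 d, G (s + τ) with hN
  set A : ℝ → ENNReal := (Icc (-h) h).indicator (fun d => ENNReal.ofReal (1 / |d|)) with hA
  set b : ℝ → ENNReal := (Ioi h).indicator (fun d => ENNReal.ofReal (2 / d ^ 2)) with hb
  have hAm : Measurable A := by
    refine Measurable.indicator ?_ measurableSet_Icc
    fun_prop
  have hbm : Measurable b := by
    refine Measurable.indicator ?_ measurableSet_Ioi
    fun_prop
  have hNm : Measurable (Function.uncurry N) := by
    have e1 : Function.uncurry N = fun p : ℝ × ℝ => ∫⁻ τ, 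
        {q : (ℝ × ℝ) × ℝ | q.2 ∈ uIcc 0 q.1.2}.indicator (fun q => G (q.1.1 + q.2)) (p, τ) := by
      ext ⟨s, d⟩
      simp only [Function.uncurry, hN]
      rw [← lintegral_indicator measurableSet_uIcc]
      rfl
    rw [e1]
    refine Measurable.lintegral_prod_right' (f := {q : (ℝ × ℝ) × ℝ | q.2 ∈ uIcc 0 q.1.2}.indicator (fun q => G (q.1.1 + q.2))) ?_
    refine Measurable.indicator (by fun_prop) ?_
    simp only [uIcc, mem_Icc]
    rw [Set.ofPred_and]
    exact MeasurableSet.inter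
      (measurableSet_le (f := fun q : (ℝ × ℝ) × ℝ => min 0 q.1.2) (g := fun q => q.2) (by fun_prop) (by fun_prop))
      (measurableSet_le (g := fun q : (ℝ × ℝ) × ℝ => max 0 q.1.2) (f := fun q => q.2) (by fun_prop) (by fun_prop))
  have hpt : ∀ s d, W s (s + d) ≤ A d * N s d + (b d + b (-d)) * (E s + E (s + d)) := by
    intro s d
    by_cases hd : |d| ≤ h
    · refine (near s d hd).trans ?_
      have : A d = ENNReal.ofReal (1 / |d|) := by
        rw [hA, indicator_of_mem]; exact abs_le.mp hd
      rw [this]; exact le_self_add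
    · push Not at hd
      refine (far s d hd).trans ?_
      refine le_trans ?_ le_add_self
      gcongr
      rcases lt_abs.mp hd with h1 | h1
      · have : b d = ENNReal.ofReal (2 / d ^ 2) := by rw [hb, indicator_of_mem]; exact h1
        rw [this]; exact le_self_add
      · have : b (-d) = ENNReal.ofReal (2 / d ^ 2) := by
          rw [hb, indicator_of_mem]
          · rw [neg_sq]
          · exact h1
        rw [this]; exact le_add_self
  have hNint : ∀ d, ∫⁻ s, N s d = ENNReal.ofReal |d| * ∫⁻ t, G t := by
    intro d
    simp only [hN]
    rw [lintegral_lintegral_swap]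
    · simp_rw [lintegral_add_right_eq_self G]
      simp [Real.volume_interval, mul_comm]
    · exact (hG.comp (measurable_fst.add measurable_snd)).aemeasurable
  calc ∫⁻ s, ∫⁻ t, W s t = ∫⁻ s, ∫⁻ d, W s (s + d) := by
        congr 1; ext s; rw [lintegral_add_left_eq_self (W s) s]
    _ ≤ ∫⁻ s, ∫⁻ d, (A d * N s d + (b d + b (-d)) * (E s + E (s + d))) :=
        lintegral_mono fun s => lintegral_mono fun d => hpt s d
    _ = ∫⁻ d, ∫⁻ s, (A d * N s d + (b d + b (-d)) * (E s + E (s + d))) := by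
        apply lintegral_lintegral_swap
        apply Measurable.aemeasurable
        have : Measurable fun p : ℝ × ℝ => N p.1 p.2 := hNm
        simp only [Function.uncurry_def]
        fun_prop
    _ = ∫⁻ d, (A d * (ENNReal.ofReal |d| * ∫⁻ t, G t) + (b d + b (-d)) * (2 * ∫⁻ t, E t)) := by
        congr 1; ext d
        have m1 : Measurable fun s => N s d := hNm.comp (measurable_id.prodMk measurable_const)
        rw [lintegral_add_left (by fun_prop), lintegral_const_mul _ m1, hNint,
          lintegral_const_mul _ (by fun_prop), lintegral_add_left hE,
          lintegral_add_right_eq_self E, two_mul]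
    _ ≤ ∫⁻ d, ((Icc (-h) h).indicator (fun _ => ∫⁻ t, G t) d + (b d + b (-d)) * (2 * ∫⁻ t, E t)) := by
        refine lintegral_mono fun d => ?_
        gcongr
        by_cases hd : d ∈ Icc (-h) h
        · rw [hA, indicator_of_mem hd, indicator_of_mem hd, ← mul_assoc,
            ← ENNReal.ofReal_mul (by positivity)]
          refine (mul_le_of_le_one_left zero_le ?_)
          rw [ENNReal.ofReal_le_one, one_div]
          exact inv_mul_le_one
        · rw [hA, indicator_of_notMem hd]; simp
    _ = _ := by
        rw [lintegral_add_left (by measurability), lintegral_indicator measurableSet_Icc,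
          lintegral_mul_const _ (by fun_prop), lintegral_add_left hbm,
          lintegral_neg_eq_self b, tail_aux hh]
        simp only [lintegral_const, Measure.restrict_apply MeasurableSet.univ, univ_inter, Real.volume_Icc]
        rw [mul_comm, ← ENNReal.ofReal_add (by positivity) (by positivity), ← mul_assoc]
        congr 2
        · congr 1; ring
        · rw [show (2 : ENNReal) = ENNReal.ofReal 2 by simp, ← ENNReal.ofReal_mul (by positivity)]
          congr 1; ring

lemma sum_aux (ξ : ℕ → ℝ) (E F : ℝ → ENNReal) (K : ENNReal) (n : ℕ) 
    (hm : ∀ i < n, ξ i < ξ (i + 1))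
    (hi : ∀ i < n, ∫⁻ t in Ioc (ξ i) (ξ (i + 1)), E t ≤ K * ∫⁻ t in Ioc (ξ i) (ξ (i + 1)), F t) :
    ξ 0 ≤ ξ n ∧ ∫⁻ t in Ioc (ξ 0) (ξ n), E t ≤ K * ∫⁻ t in Ioc (ξ 0) (ξ n), F t := by
  induction n with
  | zero => simp
  | succ n ih =>
    obtain ⟨h1, h2⟩ := ih (fun i hi => hm i (by omega)) (fun i hh => hi i (by omega))
    have h3 := hm n (by omega)
    refine ⟨h1.trans h3.le, ?_⟩
    rw [← Ioc_union_Ioc_eq_Ioc h1 h3.le,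
      lintegral_union measurableSet_Ioc (Ioc_disjoint_Ioc_of_le le_rfl),
      lintegral_union measurableSet_Ioc (Ioc_disjoint_Ioc_of_le le_rfl), mul_add]
    exact add_le_add h2 (hi n (by omega))

lemma find_aux (ξ : ℕ → ℝ) (n : ℕ) (t : ℝ) (h0 : ξ 0 < t) (hn : t ≤ ξ n) :
    ∃ i < n, t ∈ Ioc (ξ i) (ξ (i + 1)) := by
  induction n with
  | zero => linarith
  | succ n ih =>
    by_cases h : t ≤ ξ n
    · obtain ⟨i, hi, h⟩ := ih h
      exact ⟨i, by omega, h⟩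
    · exact ⟨n, by omega, not_le.mp h, hn⟩

lemma ineq_aux {e g : ℝ → ℝ} {a b : ℝ} (hC : ContinuousOn e (Icc a b)) {S : Set ℝ} (hS : S.Countable)
    (hg : Measurable g)
    (hd : ∀ t ∈ Ioo a b \ S, HasDerivAt e (g t) t)
    (hfin : ∫⁻ t in Ioo a b, ENNReal.ofReal (g t ^ 2) ≠ ⊤) {x y : ℝ} (hx : x ∈ Ioo a b)
    (hy : y ∈ Ioo a b) (hxy : x < y) :
    ENNReal.ofReal ((e x - e y) ^ 2) ≤
      ENNReal.ofReal (y - x) * ∫⁻ t in Icc x y, ENNReal.ofReal (g t ^ 2) := by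
  have hsub : Ioc x y ⊆ Ioo a b := fun t ht => ⟨hx.1.trans ht.1, ht.2.trans_lt hy.2⟩
  have hsub' : Icc x y ⊆ Icc a b := Icc_subset_Icc hx.1.le hy.2.le
  have i2 : IntegrableOn (fun t => g t ^ 2) (Ioc x y) := by
    refine ⟨(hg.pow_const 2).aestronglyMeasurable, ?_⟩
    rw [hasFiniteIntegral_iff_ofReal (by filter_upwards with t; positivity)]
    exact (lintegral_mono_set hsub).trans_lt hfin.lt_top
  have i1 : IntegrableOn g (Ioc x y) := by
    refine Integrable.mono' (g := fun t => 1 + g t ^ 2) (Integrable.add (by simp) i2) hg.aestronglyMeasurable ?_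
    filter_upwards with t
    rw [Real.norm_eq_abs, abs_le]; constructor <;> nlinarith [sq_nonneg (g t + 1), sq_nonneg (g t - 1)]
  have j1 := (intervalIntegrable_iff_integrableOn_Ioc_of_le hxy.le).mpr i1
  have j2 := (intervalIntegrable_iff_integrableOn_Ioc_of_le hxy.le).mpr i2
  have h1 : ∫ t in x..y, g t = e y - e x := by
    refine integral_eq_of_hasDerivAt_off_countable e g hS ?_ ?_ j1
    · rw [uIcc_of_le hxy.le]; exact hC.mono hsub'
    · rw [min_eq_left hxy.le, max_eq_right hxy.le]
      exact fun t ht => hd t ⟨hsub ⟨ht.1.1, ht.1.2.le⟩, ht.2⟩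
  have h2 := cs_aux_s8 hxy j1 j2
  rw [h1, intervalIntegral.integral_of_le hxy.le] at h2
  rw [← setLIntegral_congr Ioc_ae_eq_Icc, ← ofReal_integral_eq_lintegral_ofReal i2 
    (by filter_upwards with t; positivity), ← ENNReal.ofReal_mul (by linarith)]
  apply ENNReal.ofReal_le_ofReal
  calc _ = (e y - e x) ^ 2 := by ring
    _ ≤ _ := h2

lemma elem_aux {m : ℕ} {a b : ℝ} (hab : a < b) {v vb : ℝ → ℝ}
    (hv : ContDiffOn ℝ ((m + 1 : ℕ) + 1) v (Icc a b)) {c d : ℝ} (hcd : c < d) (hac : a ≤ c) (hdb : d ≤ b)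
    (p : Polynomial ℝ) (hp : p.natDegree ≤ m + 1) (hvb : ∀ t ∈ Icc c d, vb t = p.eval t)
    (hz : ∀ j ≤ m + 1, p.eval (c + (j : ℝ) * (d - c) / (m + 1 : ℕ)) =
            v (c + (j : ℝ) * (d - c) / (m + 1 : ℕ))) :
    (∀ t ∈ Icc c d, (v t - vb t) ^ 2 ≤ 
      (d - c) ^ (2 * (m + 1) + 1) * ∫ t in c..d, iteratedDerivWithin (m + 1 + 1) v (Icc a b) t ^ 2) ∧
    ∀ t ∈ Ioo c d, DifferentiableAt ℝ (fun t => v t - vb t) t ∧ (deriv (fun t => v t - vb t) t) ^ 2 ≤ 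
      (d - c) ^ (2 * m + 1) * ∫ t in c..d, iteratedDerivWithin (m + 1 + 1) v (Icc a b) t ^ 2 := by
  set F : ℕ → ℝ → ℝ := fun j t => 
    iteratedDerivWithin j v (Icc a b) t - ((Polynomial.derivative)^[j] p).eval t with hF
  have hu := uniqueDiffOn_Icc hab
  have hsub : Icc c d ⊆ Icc a b := Icc_subset_Icc hac hdb
  have hc : ∀ j ≤ m + 1 + 1, ContinuousOn (F j) (Icc c d) := by
    intro j hj
    refine ContinuousOn.sub ((hv.continuousOn_iteratedDerivWithin ?_ hu).mono hsub) 
      (Polynomial.continuous _).continuousOn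
    exact_mod_cast hj
  have hd : ∀ j ≤ m + 1, ∀ t ∈ Ioo c d, HasDerivAt (F j) (F (j + 1) t) t := by
    intro j hj t ht
    refine HasDerivAt.sub ?_ ?_
    · rw [iteratedDerivWithin_succ]
      have h1 := hv.differentiableOn_iteratedDerivWithin (m := j) (by exact_mod_cast Nat.lt_succ_of_le hj) hu t (hsub ⟨ht.1.le, ht.2.le⟩)
      exact h1.hasDerivWithinAt.hasDerivAt (Icc_mem_nhds (hac.trans_lt ht.1) (ht.2.trans_le hdb))
    · rw [Function.iterate_succ_apply']
      exact Polynomial.hasDerivAt _ _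
  have hF0 : ∀ t ∈ Icc c d, F 0 t = v t - vb t := by
    intro t ht
    simp [hF, hvb t ht]
  have hFl : ∀ t, F (m + 1 + 1) t = iteratedDerivWithin (m + 1 + 1) v (Icc a b) t := by
    intro t
    simp only [hF]
    rw [Polynomial.iterate_derivative_eq_zero (by omega)]; simp
  have hm0 : (0 : ℝ) < (m + 1 : ℕ) := by positivity
  have hz' : ∀ j ≤ m + 1, c + (j : ℝ) * (d - c) / (m + 1 : ℕ) ∈ Icc c d ∧ 
      F 0 (c + (j : ℝ) * (d - c) / (m + 1 : ℕ)) = 0 := by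
    intro j hj
    have h1 : (j : ℝ) ≤ (m + 1 : ℕ) := by exact_mod_cast hj
    have hL : 0 < d - c := by linarith
    constructor
    · constructor
      · have : 0 ≤ (j : ℝ) * (d - c) / (m + 1 : ℕ) := by positivity
        linarith
      · have : (j : ℝ) * (d - c) / (m + 1 : ℕ) ≤ d - c := by
          rw [div_le_iff₀ hm0]; nlinarith
        linarith
    · simp only [hF, iteratedDerivWithin_zero, Function.iterate_zero, id]
      rw [hz j hj, sub_self]
  have hzm : ∀ j < m + 1, c + (j : ℝ) * (d - c) / (m + 1 : ℕ) < c + ((j + 1 : ℕ) : ℝ) * (d - c) / (m + 1 : ℕ) := by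
    intro j hj
    have hL : 0 < d - c := by linarith
    gcongr
    omega
  simp only [← hFl]
  constructor
  · intro t ht
    rw [← hF0 t ht]
    exact chain_sq hcd (m + 1) F hc hd (fun j => c + (j : ℝ) * (d - c) / (m + 1 : ℕ)) hz' hzm t ht
  · intro t ht
    have hda : HasDerivAt (fun t => v t - vb t) (F 1 t) t := by
      refine (hd 0 (by omega) t ht).congr_of_eventuallyEq ?_
      filter_upwards [Icc_mem_nhds ht.1 ht.2] with x hx
      exact (hF0 x hx).symm
    refine ⟨hda.differentiableAt, ?_⟩
    rw [hda.deriv]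
    obtain ⟨y, hy, hym⟩ := rolle_aux (hc 0 (by omega)) (hd 0 (by omega)) m 
      (fun j => c + (j : ℝ) * (d - c) / (m + 1 : ℕ)) hz' hzm
    exact chain_sq hcd m (fun j => F (j + 1)) (fun j hj => hc (j + 1) (by omega))
      (fun j hj => hd (j + 1) (by omega)) y hy hym t ⟨ht.1.le, ht.2.le⟩


lemma elem_lint {f D : ℝ → ℝ} {c d h : ℝ} (hcd : c < d) (hh : d - c ≤ h) (n : ℕ)
    (hD : ContinuousOn D (Icc c d))
    (hf : ∀ t ∈ Ioo c d, f t ^ 2 ≤ (d - c) ^ n * ∫ t in c..d, D t ^ 2) :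
    ∫⁻ t in Ioc c d, ENNReal.ofReal (f t ^ 2) ≤
      ENNReal.ofReal (h ^ (n + 1)) * ∫⁻ t in Ioc c d, ENNReal.ofReal (D t ^ 2) := by
  have hi : IntegrableOn (fun t => D t ^ 2) (Ioc c d) :=
    ((hD.pow 2).integrableOn_Icc).mono_set Ioc_subset_Icc_self
  rw [← ofReal_integral_eq_lintegral_ofReal hi (by filter_upwards with t; positivity),
    ← setLIntegral_congr Ioo_ae_eq_Ioc, ← intervalIntegral.integral_of_le hcd.le]
  have hJ : 0 ≤ ∫ t in c..d, D t ^ 2 :=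
    intervalIntegral.integral_nonneg hcd.le (fun t _ => sq_nonneg _)
  have hL : 0 < d - c := by linarith
  calc ∫⁻ t in Ioo c d, ENNReal.ofReal (f t ^ 2)
      ≤ ∫⁻ t in Ioo c d, ENNReal.ofReal ((d - c) ^ n * ∫ t in c..d, D t ^ 2) :=
        setLIntegral_mono measurable_const fun t ht => ENNReal.ofReal_le_ofReal (hf t ht)
    _ = ENNReal.ofReal ((d - c) ^ n * ∫ t in c..d, D t ^ 2) * ENNReal.ofReal (d - c) := by simp
    _ = ENNReal.ofReal ((d - c) ^ (n + 1) * ∫ t in c..d, D t ^ 2) := by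
        rw [← ENNReal.ofReal_mul (by positivity)]; congr 1; ring
    _ ≤ ENNReal.ofReal (h ^ (n + 1) * ∫ t in c..d, D t ^ 2) := by
        apply ENNReal.ofReal_le_ofReal; gcongr
    _ = _ := ENNReal.ofReal_mul (by have := hL.le.trans hh; positivity)

lemma shift_aux (G : ℝ → ENNReal) (s d : ℝ) :
    ∫⁻ τ in uIcc 0 d, G (s + τ) = ∫⁻ τ in uIcc s (s + d), G τ := by
  rw [← lintegral_indicator measurableSet_uIcc, ← lintegral_indicator measurableSet_uIcc,
    ← lintegral_add_left_eq_self ((uIcc s (s + d)).indicator _) s]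
  congr 1; ext τ
  have : τ ∈ uIcc 0 d ↔ s + τ ∈ uIcc s (s + d) := by
    simp only [mem_uIcc]
    constructor <;> (rintro (h | h) <;> [left; right] <;> constructor <;> linarith [h.1, h.2])
  by_cases h : τ ∈ uIcc 0 d
  · rw [indicator_of_mem h, indicator_of_mem (this.mp h)]
  · rw [indicator_of_notMem h, indicator_of_notMem (fun h' => h (this.mpr h'))]

lemma gag_aux {e g : ℝ → ℝ} {a b : ℝ} (hC : ContinuousOn e (Icc a b)) {S : Set ℝ} (hS : S.Countable)
    (hg : Measurable g)
    (hd : ∀ t ∈ Ioo a b \ S, HasDerivAt e (g t) t)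
    (hfin : ∫⁻ t in Ioo a b, ENNReal.ofReal (g t ^ 2) ≠ ⊤) {h : ℝ} (hh : 0 < h) :
    ENNReal.ofReal (∫ s in Ioo a b, ∫ t in Ioo a b, (e s - e t) ^ 2 / (s - t) ^ 2) ≤
      ENNReal.ofReal (2 * h) * (∫⁻ t in Ioo a b, ENNReal.ofReal (g t ^ 2)) +
      ENNReal.ofReal (8 / h) * ∫⁻ t in Ioo a b, ENNReal.ofReal (e t ^ 2) := by
  classical
  set E : ℝ → ENNReal := (Ioo a b).piecewise (fun t => ENNReal.ofReal (e t ^ 2)) 0 with hE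
  set G : ℝ → ENNReal := (Ioo a b).indicator (fun t => ENNReal.ofReal (g t ^ 2)) with hG
  have hEm : Measurable E := by
    refine ContinuousOn.measurable_piecewise ?_ continuousOn_const measurableSet_Ioo
    exact ENNReal.continuous_ofReal.comp_continuousOn ((hC.mono Ioo_subset_Icc_self).pow 2)
  have hGm : Measurable G := Measurable.indicator (by fun_prop) measurableSet_Ioo
  have hEi : ∫⁻ t, E t = ∫⁻ t in Ioo a b, ENNReal.ofReal (e t ^ 2) := by
    rw [← lintegral_indicator measurableSet_Ioo, hE, Set.piecewise_eq_indicator]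
  have hGi : ∫⁻ t, G t = ∫⁻ t in Ioo a b, ENNReal.ofReal (g t ^ 2) := by
    rw [← lintegral_indicator measurableSet_Ioo]
  set W : ℝ → ℝ → ENNReal := fun s t => (Ioo a b).indicator (fun s => (Ioo a b).indicator
    (fun t => ENNReal.ofReal ((e s - e t) ^ 2 / (s - t) ^ 2)) t) s with hW
  have hWin : ∀ s ∈ Ioo a b, ∀ t ∈ Ioo a b, W s t = ENNReal.ofReal ((e s - e t) ^ 2 / (s - t) ^ 2) := by
    intro s hs t ht
    simp only [hW]; rw [indicator_of_mem hs, indicator_of_mem ht]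
  have hWout : ∀ s t, ¬ (s ∈ Ioo a b ∧ t ∈ Ioo a b) → W s t = 0 := by
    intro s t hst
    simp only [hW]
    by_cases hs : s ∈ Ioo a b
    · rw [indicator_of_mem hs, indicator_of_notMem (fun ht => hst ⟨hs, ht⟩)]
    · rw [indicator_of_notMem hs]
  have key : ∀ x ∈ Ioo a b, ∀ y ∈ Ioo a b, x < y → ENNReal.ofReal ((e x - e y) ^ 2 / (x - y) ^ 2) ≤
      ENNReal.ofReal (1 / (y - x)) * ∫⁻ τ in Icc x y, G τ := by
    intro x hx y hy hxy
    have h1 := ineq_aux hC hS hg hd hfin hx hy hxy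
    have h2 : ∫⁻ τ in Icc x y, G τ = ∫⁻ t in Icc x y, ENNReal.ofReal (g t ^ 2) := by
      refine setLIntegral_congr_fun measurableSet_Icc fun t ht => ?_
      exact indicator_of_mem (show t ∈ Ioo a b from ⟨hx.1.trans_le ht.1, ht.2.trans_lt hy.2⟩) _
    rw [h2]
    have hL : 0 < y - x := by linarith
    calc _ = ENNReal.ofReal (1 / (y - x) ^ 2) * ENNReal.ofReal ((e x - e y) ^ 2) := by
          rw [← ENNReal.ofReal_mul (by positivity)]; congr 1; rw [← neg_sub y x]; ring
      _ ≤ ENNReal.ofReal (1 / (y - x) ^ 2) * (ENNReal.ofReal (y - x) * ∫⁻ t in Icc x y, ENNReal.ofReal (g t ^ 2)) := by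
          gcongr
      _ = _ := by
          rw [← mul_assoc, ← ENNReal.ofReal_mul (by positivity)]
          congr 2; field_simp
  have hkb := kernel_bound E G hEm hGm hh W (by
      intro s d _
      by_cases hin : s ∈ Ioo a b ∧ s + d ∈ Ioo a b
      · rw [hWin s hin.1 _ hin.2, shift_aux]
        rcases lt_trichotomy d 0 with h0 | h0 | h0
        · have := key (s + d) hin.2 s hin.1 (by linarith)
          rw [uIcc_of_ge (by linarith), abs_of_neg h0]
          rw [show (e s - e (s + d)) ^ 2 / (s - (s + d)) ^ 2 =
            (e (s + d) - e s) ^ 2 / (s + d - s) ^ 2 by congr 1 <;> ring,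
            show 1 / -d = 1 / (s - (s + d)) by congr 1; ring]
          exact this
        · subst h0; simp
        · have := key s hin.1 (s + d) hin.2 (by linarith)
          rw [uIcc_of_le (by linarith), abs_of_pos h0]
          convert this using 2
          congr 1; ring
      · rw [hWout _ _ hin]; exact zero_le) (by
      intro s d _
      by_cases hin : s ∈ Ioo a b ∧ s + d ∈ Ioo a b
      · rw [hWin s hin.1 _ hin.2, hE, Set.piecewise_eq_of_mem _ _ _ hin.1, Set.piecewise_eq_of_mem _ _ _ hin.2,
          ← ENNReal.ofReal_add (by positivity) (by positivity), ← ENNReal.ofReal_mul (by positivity)]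
        apply ENNReal.ofReal_le_ofReal
        rw [show s - (s + d) = -d by ring, neg_sq, div_mul_eq_mul_div]
        gcongr
        nlinarith [sq_nonneg (e s + e (s + d))]
      · rw [hWout _ _ hin]; exact zero_le)
  rw [hEi, hGi] at hkb
  refine le_trans ?_ hkb
  have e1 : ∫⁻ s, ∫⁻ t, W s t = ∫⁻ s in Ioo a b, ∫⁻ t in Ioo a b, ENNReal.ofReal ((e s - e t) ^ 2 / (s - t) ^ 2) := by
    rw [← lintegral_indicator measurableSet_Ioo]
    congr 1; ext s
    by_cases hs : s ∈ Ioo a b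
    · rw [indicator_of_mem hs, ← lintegral_indicator measurableSet_Ioo]
      congr 1; ext t; simp only [hW]; rw [indicator_of_mem hs]
    · rw [indicator_of_notMem hs]
      simp only [hW]; simp [indicator_of_notMem hs]
  rw [e1]
  refine (Real.ofReal_le_enorm _).trans ((enorm_integral_le_lintegral_enorm _).trans ?_)
  refine lintegral_mono fun s => (enorm_integral_le_lintegral_enorm _).trans ?_
  refine lintegral_mono fun t => ?_
  rw [Real.enorm_of_nonneg (by positivity)]

theorem lagrange_interpolation_gagliardo_error (k : ℕ) (hk : 1 ≤ k) :
    ∃ C : ℝ, 0 < C ∧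
      ∀ (a b : ℝ) (_hab : a < b) (r : ℕ) (hr : 0 < r) (ξ : ℕ → ℝ)
        (_h0 : ξ 0 = a) (_hr' : ξ r = b) (_hmono : ∀ i < r, ξ i < ξ (i + 1))
        (v vb : ℝ → ℝ)
        (_hv : ContDiffOn ℝ (k + 1) v (Icc a b))
        (_hvb : ContinuousOn vb (Icc a b))
        -- `vb` is the piecewise Lagrange interpolant of `v` of degree `k`
        (_hinterp : ∀ i < r, ∃ p : Polynomial ℝ, p.natDegree ≤ k ∧
          (∀ t ∈ Icc (ξ i) (ξ (i + 1)), vb t = p.eval t) ∧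
          (∀ j ≤ k, p.eval (ξ i + (j : ℝ) * (ξ (i + 1) - ξ i) / k) =
            v (ξ i + (j : ℝ) * (ξ (i + 1) - ξ i) / k))),
        (∫ s in Ioo a b, ∫ t in Ioo a b,
            ((v s - vb s) - (v t - vb t)) ^ 2 / (s - t) ^ 2) ≤
          C * ((Finset.range r).sup' (Finset.nonempty_range_iff.mpr hr.ne')
                fun i => ξ (i + 1) - ξ i) ^ (2 * k + 1) *
            (∫ t in Ioo a b, (iteratedDerivWithin (k + 1) v (Icc a b) t) ^ 2) := by
  obtain ⟨m, rfl⟩ : ∃ m, k = m + 1 := ⟨k - 1, by omega⟩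
  refine ⟨10, by norm_num, ?_⟩
  intro a b hab r hr ξ h0 hr' hmono v vb hv hvb hinterp
  set h := (Finset.range r).sup' (Finset.nonempty_range_iff.mpr hr.ne')
                fun i => ξ (i + 1) - ξ i with hh
  have hle : ∀ i < r, ξ (i + 1) - ξ i ≤ h := fun i hi =>
    Finset.le_sup' (fun i => ξ (i + 1) - ξ i) (Finset.mem_range.mpr hi)
  have hpos : 0 < h := lt_of_lt_of_le (by linarith [hmono 0 hr]) (hle 0 hr)
  set D := iteratedDerivWithin (m + 1 + 1) v (Icc a b) with hD
  have hDc : ContinuousOn D (Icc a b) :=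
    hv.continuousOn_iteratedDerivWithin (by exact_mod_cast le_rfl) (uniqueDiffOn_Icc hab)
  set e : ℝ → ℝ := fun t => v t - vb t with he
  have hec : ContinuousOn e (Icc a b) := hv.continuousOn.sub hvb
  have hmon : MonotoneOn ξ (Icc 0 r) := by
    refine monotoneOn_of_le_succ ordConnected_Icc fun i _ _ hi => ?_
    exact (hmono i (by simpa using hi.2)).le
  have hlo : ∀ i ≤ r, a ≤ ξ i := fun i hi => h0 ▸ hmon ⟨le_rfl, by omega⟩ ⟨by omega, hi⟩ (by omega)
  have hhi : ∀ i ≤ r, ξ i ≤ b := fun i hi => hr' ▸ hmon ⟨by omega, hi⟩ ⟨by omega, le_rfl⟩ hi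
  have hel : ∀ i < r, (∀ t ∈ Icc (ξ i) (ξ (i + 1)), e t ^ 2 ≤
      (ξ (i + 1) - ξ i) ^ (2 * (m + 1) + 1) * ∫ t in ξ i..ξ (i + 1), D t ^ 2) ∧
      ∀ t ∈ Ioo (ξ i) (ξ (i + 1)), DifferentiableAt ℝ e t ∧ (deriv e t) ^ 2 ≤
      (ξ (i + 1) - ξ i) ^ (2 * m + 1) * ∫ t in ξ i..ξ (i + 1), D t ^ 2 := by
    intro i hi
    obtain ⟨p, hp1, hp2, hp3⟩ := hinterp i hi
    exact elem_aux hab hv (hmono i hi) (hlo i hi.le) (hhi (i + 1) hi) p hp1 hp2 hp3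
  have hDi : ∀ i < r, ContinuousOn D (Icc (ξ i) (ξ (i + 1))) := fun i hi =>
    hDc.mono (Icc_subset_Icc (hlo i hi.le) (hhi (i + 1) hi))
  have b1 := (sum_aux ξ (fun t => ENNReal.ofReal (e t ^ 2)) (fun t => ENNReal.ofReal (D t ^ 2)) _ r hmono
    (fun i hi => elem_lint (hmono i hi) (hle i hi) _ (hDi i hi)
      (fun t ht => (hel i hi).1 t ⟨ht.1.le, ht.2.le⟩))).2
  have b2 := (sum_aux ξ (fun t => ENNReal.ofReal (deriv e t ^ 2)) (fun t => ENNReal.ofReal (D t ^ 2)) _ r hmono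
    (fun i hi => elem_lint (hmono i hi) (hle i hi) _ (hDi i hi)
      (fun t ht => ((hel i hi).2 t ht).2))).2
  rw [h0, hr'] at b1 b2
  have hint : IntegrableOn (fun t => D t ^ 2) (Ioo a b) :=
    ((hDc.pow 2).integrableOn_Icc).mono_set Ioo_subset_Icc_self
  rw [← setLIntegral_congr Ioo_ae_eq_Ioc, ← setLIntegral_congr Ioo_ae_eq_Ioc,
    ← ofReal_integral_eq_lintegral_ofReal hint (by filter_upwards with t; positivity)] at b1 b2
  have hJ : 0 ≤ ∫ t in Ioo a b, D t ^ 2 := integral_nonneg fun t => sq_nonneg _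
  set J := ∫ t in Ioo a b, D t ^ 2 with hJd
  have hg := gag_aux (e := e) (g := deriv e) hec (S := ξ '' (Iic r)) ((finite_Iic r).image ξ).countable
    (measurable_deriv e) (by
      rintro t ⟨ht, htS⟩
      obtain ⟨i, hi, hti⟩ := find_aux ξ r t (h0 ▸ ht.1) (hr' ▸ ht.2.le)
      have : t ≠ ξ (i + 1) := fun hc => htS ⟨i + 1, hi, hc.symm⟩
      exact ((hel i hi).2 t ⟨hti.1, lt_of_le_of_ne hti.2 this⟩).1.hasDerivAt)
    (ne_top_of_le_ne_top (ENNReal.mul_ne_top ENNReal.ofReal_ne_top ENNReal.ofReal_ne_top) b2) hpos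
  rw [← ENNReal.ofReal_le_ofReal_iff (by positivity)]
  refine hg.trans ((add_le_add (mul_le_mul_right b2 _) (mul_le_mul_right b1 _)).trans ?_)
  simp only [← mul_assoc]
  rw [← ENNReal.ofReal_mul (by positivity), ← ENNReal.ofReal_mul (by positivity),
    ← ENNReal.ofReal_mul (by positivity), ← ENNReal.ofReal_mul (by positivity),
    ← ENNReal.ofReal_add (by positivity) (by positivity)]
  apply ENNReal.ofReal_le_ofReal
  apply le_of_eq
  field_simp
  ring
end
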